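/- arXiv:2509.25432 — 3 statements merged into one kernel-verified Lean document; each statement's English description precedes it below -/
import Mathlib

section
/- Let $k$ be an algebraically closed field and let $n \geq 0$ be an integer. Let $v_0, \dots, v_{n+1} \in k^3$ be nonzero vectors that are pairwise linearly independent, and suppose they do NOT all lie in a common $2$-dimensional linear subspace of $k^3$ (i.e., the corresponding $n+2$ distinct points of $\mathbb{P}^2_k$ are not collinear). Then the evaluation map from the space of homogeneous polynomials of degree $n$ in $k[X_0, X_1, X_2]$ to $k^{n+2}$, sending $F \mapsto (F(v_0), \dots, F(v_{n+1}))$, is surjective. (Equivalently: $n+2$ distinct points of $\mathbb{P}^2_k$ impose independent conditions on curves of degree $n$ if and only if they are not contained in a line.) -/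
theorem aux_linear_form {k : Type*} [Field k] (f : (Fin 3 → k) →ₗ[k] k) :
    ∃ L : MvPolynomial (Fin 3) k, L.IsHomogeneous 1 ∧ ∀ x, MvPolynomial.eval x L = f x := by
  refine ⟨∑ t, MvPolynomial.C (f (Pi.single t 1)) * MvPolynomial.X t, ?_, ?_⟩
  · exact MvPolynomial.IsHomogeneous.sum _ _ _ fun t _ => MvPolynomial.isHomogeneous_C_mul_X _ _
  · intro x
    rw [LinearMap.pi_apply_eq_sum_univ f x]
    simp only [map_sum, map_mul, MvPolynomial.eval_C, MvPolynomial.eval_X, smul_eq_mul]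
    refine Finset.sum_congr rfl fun t _ => ?_
    rw [mul_comm]
    congr 2
    funext j
    simp [Pi.single_apply, eq_comm]

theorem aux_separating {k : Type*} [Field k] (W : Submodule k (Fin 3 → k)) (p : Fin 3 → k)
    (hp : p ∉ W) :
    ∃ L : MvPolynomial (Fin 3) k, L.IsHomogeneous 1 ∧ MvPolynomial.eval p L ≠ 0 ∧
      ∀ x ∈ W, MvPolynomial.eval x L = 0 := by
  obtain ⟨f, hf, hW⟩ := Submodule.exists_le_ker_of_notMem hp
  obtain ⟨L, hL, he⟩ := aux_linear_form f
  exact ⟨L, hL, by rwa [he], fun x hx => by rw [he]; exact hW hx⟩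

theorem aux_indicator {k : Type*} [Field k] (n : ℕ)
    (v : Fin (n + 2) → (Fin 3 → k))
    (hind : ∀ i j, i ≠ j → LinearIndependent k ![v i, v j])
    (hncol : ¬ ∃ W : Submodule k (Fin 3 → k), Module.finrank k W = 2 ∧ ∀ i, v i ∈ W)
    (i : Fin (n + 2)) :
    ∃ F : MvPolynomial (Fin 3) k, F.IsHomogeneous n ∧ MvPolynomial.eval (v i) F ≠ 0 ∧
      ∀ j, j ≠ i → MvPolynomial.eval (v j) F = 0 := by
  obtain ⟨q, hq⟩ := exists_ne i
  have hr : ∃ r, v r ∉ Submodule.span k {v i, v q} := by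
    by_contra! h
    refine hncol ⟨_, ?_, h⟩
    have := finrank_span_eq_card (hind i q hq.symm)
    rw [Matrix.range_cons, Matrix.range_cons, Matrix.range_empty, Set.union_empty,
      Set.singleton_union] at this
    simpa using this
  obtain ⟨r, hr⟩ := hr
  have hri : r ≠ i := by
    rintro rfl
    exact hr (Submodule.subset_span (by simp))
  have hrq : r ≠ q := by
    rintro rfl
    exact hr (Submodule.subset_span (by simp))
  have hi : v i ∉ Submodule.span k {v q, v r} := by
    intro h
    obtain ⟨a, b, hab⟩ := Submodule.mem_span_pair.1 h
    by_cases hb : b = 0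
    · have := LinearIndependent.pair_iff.1 (hind i q hq.symm) 1 (-a) (by simp [← hab, hb])
      exact one_ne_zero this.1
    · apply hr
      refine Submodule.mem_span_pair.2 ⟨b⁻¹, -(b⁻¹ * a), ?_⟩
      rw [← hab, smul_add, smul_smul, smul_smul, inv_mul_cancel₀ hb]
      module
  obtain ⟨L, hL, hLi, hL0⟩ := aux_separating _ _ hi
  have hg : ∀ j, ∃ G : MvPolynomial (Fin 3) k, G.IsHomogeneous 1 ∧ (j ≠ i →
      MvPolynomial.eval (v i) G ≠ 0 ∧ MvPolynomial.eval (v j) G = 0) := by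
    intro j
    by_cases hj : j = i
    · exact ⟨0, MvPolynomial.isHomogeneous_zero _ _ _, fun h => (h hj).elim⟩
    · have hn : v i ∉ Submodule.span k {v j} := by
        intro h
        obtain ⟨a, ha⟩ := Submodule.mem_span_singleton.1 h
        have := LinearIndependent.pair_iff.1 (hind i j (Ne.symm hj)) 1 (-a) (by simp [← ha])
        exact one_ne_zero this.1
      obtain ⟨G, hG, h1, h2⟩ := aux_separating _ _ hn
      exact ⟨G, hG, fun _ => ⟨h1, h2 _ (Submodule.mem_span_singleton_self _)⟩⟩
  choose G hG hG' using hg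
  have hcard : ({i, q, r} : Finset (Fin (n + 2))).card = 3 :=
    Finset.card_eq_three.2 ⟨i, q, r, hq.symm, hri.symm, hrq.symm, rfl⟩
  have hc := Finset.card_add_card_compl ({i, q, r} : Finset (Fin (n + 2)))
  rw [hcard, Fintype.card_fin] at hc
  refine ⟨L * ∏ j ∈ ({i, q, r} : Finset (Fin (n + 2)))ᶜ, G j, ?_, ?_, ?_⟩
  · have := hL.mul (MvPolynomial.IsHomogeneous.prod ({i, q, r} : Finset (Fin (n + 2)))ᶜ G
      (fun _ => 1) (fun j _ => hG j))
    convert this using 1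
    simp only [Finset.sum_const, smul_eq_mul, mul_one]
    omega
  · rw [map_mul, map_prod]
    refine mul_ne_zero hLi (Finset.prod_ne_zero_iff.2 fun j hj => (hG' j ?_).1)
    rintro rfl
    simp at hj
  · intro j hj
    rw [map_mul, map_prod]
    by_cases h : j = q ∨ j = r
    · rw [hL0 _ (Submodule.subset_span (by rcases h with rfl | rfl <;> simp)), zero_mul]
    · push Not at h
      rw [Finset.prod_eq_zero (i := j) (by simp [hj, h.1, h.2]) (hG' j hj).2, mul_zero]

/-- `n+2` distinct non-collinear points of `ℙ²` over an algebraically closed field impose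
independent conditions on curves of degree `n`: the evaluation map from degree-`n` homogeneous
polynomials in `k[X₀,X₁,X₂]` to `k^{n+2}` is surjective. -/
theorem noncollinear_points_impose_independent_conditions
    (k : Type*) [Field k] [IsAlgClosed k] (n : ℕ)
    (v : Fin (n + 2) → (Fin 3 → k))
    (hv : ∀ i, v i ≠ 0)
    (hind : ∀ i j, i ≠ j → LinearIndependent k ![v i, v j])
    (hncol : ¬ ∃ W : Submodule k (Fin 3 → k), Module.finrank k W = 2 ∧ ∀ i, v i ∈ W) :
    Function.Surjective
      (fun F : MvPolynomial.homogeneousSubmodule (Fin 3) k n =>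
        fun i : Fin (n + 2) => MvPolynomial.eval (v i) (F : MvPolynomial (Fin 3) k)) := by
  intro y
  choose F hF hne h0 using aux_indicator n v hind hncol
  refine ⟨⟨∑ i, (y i / MvPolynomial.eval (v i) (F i)) • F i,
    Submodule.sum_mem _ fun i _ => Submodule.smul_mem _ _ (hF i)⟩, ?_⟩
  funext j
  simp only [map_sum, MvPolynomial.smul_eval]
  rw [Finset.sum_eq_single j]
  · exact div_mul_cancel₀ _ (hne j)
  · intro b _ hb
    rw [h0 b j hb.symm, mul_zero]
  · simp
end

section
/- Let $k$ be an algebraically closed field and let $f \in k[X_0, X_1, X_2]$ be an irreducible homogeneous polynomial of degree $d \geq 1$ such that the only common zero in $k^3$ of $f$ and its three partial derivatives $\partial f/\partial X_0, \partial f/\partial X_1, \partial f/\partial X_2$ is the origin (i.e., the plane curve $C = V(f) \subset \mathbb{P}^2_k$ is smooth). Then the homogeneous coordinate ring $k[X_0, X_1, X_2]/(f)$ is an integrally closed domain. (This is the content of the projective normality of the smooth plane curve $C$: for all $n > 0$, the restriction map $H^0(\mathbb{P}^2_k, \mathcal{O}(n)) \to H^0(C, \mathcal{O}_C(n))$ is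 surjective.) -/
open Polynomial TensorProduct

theorem formallyEtale_away {B : Type*} [CommRing B] (F : B[X]) :
    Algebra.FormallyEtale B (Localization.Away (AdjoinRoot.mk F (derivative F))) := by
  set S := Localization.Away (AdjoinRoot.mk F (derivative F)) with hS
  set x : S := algebraMap (AdjoinRoot F) S (AdjoinRoot.root F) with hx
  have hxF : ∀ p : B[X], aeval x p = algebraMap (AdjoinRoot F) S (AdjoinRoot.mk F p) := by
    intro p
    rw [hx, aeval_algebraMap_apply, AdjoinRoot.aeval_eq]
  have hx0 : aeval x F = 0 := by rw [hxF, AdjoinRoot.mk_self, map_zero]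
  have hx1 : IsUnit (aeval x (derivative F)) := by
    rw [hxF]; exact IsLocalization.Away.algebraMap_isUnit _
  refine Algebra.FormallyEtale.iff_comp_bijective.mpr fun C _ _ I hI ↦ ⟨?_, ?_⟩
  · intro u v huv
    have hε : v x - u x ∈ I := by
      have := DFunLike.congr_fun huv x
      simp only [AlgHom.comp_apply, Ideal.Quotient.mkₐ_eq_mk] at this
      exact (Ideal.Quotient.mk_eq_mk_iff_sub_mem _ _).mp this.symm
    have h1 : aeval (u x + (v x - u x)) F = 0 := by
      rw [add_sub_cancel, aeval_algHom_apply, hx0, map_zero]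
    rw [Polynomial.aeval_add_of_sq_eq_zero _ _ _ (hI.le (Ideal.pow_mem_pow hε 2)),
      aeval_algHom_apply u, aeval_algHom_apply u, hx0, map_zero, zero_add,
      (hx1.map u).mul_right_eq_zero, sub_eq_zero] at h1
    have h2 : u.comp (Algebra.algHom B (AdjoinRoot F) S) =
        v.comp (Algebra.algHom B (AdjoinRoot F) S) := by
      apply AdjoinRoot.algHom_ext
      exact h1.symm
    apply AlgHom.coe_ringHom_injective
    apply IsLocalization.ringHom_ext (Submonoid.powers (AdjoinRoot.mk F (derivative F)))
    exact congrArg (fun t : AdjoinRoot F →ₐ[B] C => (t : AdjoinRoot F →+* C)) h2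
  · intro w
    obtain ⟨y, hy⟩ := Ideal.Quotient.mk_surjective (w x)
    have key : ∀ (z : C) (p : B[X]), Ideal.Quotient.mk I z = w x →
        Ideal.Quotient.mk I (aeval z p) = w (aeval x p) := by
      intro z p hz
      rw [← Ideal.Quotient.mkₐ_eq_mk B, ← aeval_algHom_apply, Ideal.Quotient.mkₐ_eq_mk, hz,
        aeval_algHom_apply]
    have hunit : ∀ (z : C), Ideal.Quotient.mk I z = w x → IsUnit (aeval z (derivative F)) := by
      intro z hz
      rw [← IsNilpotent.isUnit_quotient_mk_iff (I := I) ⟨2, hI⟩, key z _ hz]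
      exact hx1.map w
    have hF : aeval y F ∈ I := by
      rw [← Ideal.Quotient.eq_zero_iff_mem, key y _ hy, hx0, map_zero]
    obtain ⟨b, hb⟩ := (hunit y hy).exists_right_inv
    have hε : aeval y F * -b ∈ I := I.mul_mem_right _ hF
    set z := y + aeval y F * -b with hz
    have hzw : Ideal.Quotient.mk I z = w x := by
      rw [hz, map_add, Ideal.Quotient.eq_zero_iff_mem.mpr hε, add_zero, hy]
    have hz0 : aeval z F = 0 := by
      rw [hz, Polynomial.aeval_add_of_sq_eq_zero _ _ _ (hI.le (Ideal.pow_mem_pow hε 2))]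
      linear_combination (-aeval y F) * hb
    let u0 : AdjoinRoot F →ₐ[B] C := AdjoinRoot.liftAlgHom F (Algebra.ofId B C) z hz0
    have hu0 : IsUnit (u0 (AdjoinRoot.mk F (derivative F))) := by
      have : u0 (AdjoinRoot.mk F (derivative F)) = aeval z (derivative F) :=
        AdjoinRoot.lift_mk (i := (Algebra.ofId B C).toRingHom) hz0 _
      rw [this]
      exact hunit z hzw
    let u : S →ₐ[B] C := IsLocalization.Away.liftAlgHom (AdjoinRoot.mk F (derivative F)) (f := u0) hu0
    have hux : u x = z := by
      have h0 : u x = u0 (AdjoinRoot.root F) := by simp [u, hx]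
      rw [h0]
      exact AdjoinRoot.lift_root (i := (Algebra.ofId B C).toRingHom) hz0
    refine ⟨u, ?_⟩
    apply AlgHom.coe_ringHom_injective
    apply IsLocalization.ringHom_ext (Submonoid.powers (AdjoinRoot.mk F (derivative F)))
    have h2 : ((Ideal.Quotient.mkₐ B I).comp u).comp (Algebra.algHom B (AdjoinRoot F) S) =
        w.comp (Algebra.algHom B (AdjoinRoot F) S) := by
      apply AdjoinRoot.algHom_ext
      change Ideal.Quotient.mk I (u x) = w x
      rw [hux, hzw]
    exact congrArg (fun t : AdjoinRoot F →ₐ[B] (C ⧸ I) => (t : AdjoinRoot F →+* C ⧸ I)) h2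

theorem etale_away {B : Type*} [CommRing B] (F : B[X]) :
    Algebra.Etale B (Localization.Away (AdjoinRoot.mk F (derivative F))) := by
  have := formallyEtale_away F
  have : Algebra.FinitePresentation (AdjoinRoot F) (Localization.Away (AdjoinRoot.mk F (derivative F))) :=
    IsLocalization.Away.finitePresentation (AdjoinRoot.mk F (derivative F))
  have h : Algebra.FinitePresentation B (AdjoinRoot F) :=
    Algebra.FinitePresentation.quotient (Submodule.fg_span_singleton _)
  exact { finitePresentation := .trans B (AdjoinRoot F) _ }

theorem etale_descent {B : Type*} [CommRing B] [IsDomain B] [IsIntegrallyClosed B]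
    (F : B[X]) [IsDomain (AdjoinRoot F)] (hF' : AdjoinRoot.mk F (derivative F) ≠ 0)
    (a b : AdjoinRoot F) (hb : b ≠ 0) (p : (AdjoinRoot F)[X]) (hp : p.Monic)
    (hpa : (p.scaleRoots b).eval a = 0) :
    ∃ (n : ℕ) (c : AdjoinRoot F), AdjoinRoot.mk F (derivative F) ^ n * a = b * c := by
  have := etale_away F
  set S := Localization.Away (AdjoinRoot.mk F (derivative F)) with hS
  have hAS : Function.Injective (algebraMap (AdjoinRoot F) S) :=
    IsLocalization.injective S (M := Submonoid.powers (AdjoinRoot.mk F (derivative F)))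
      (powers_le_nonZeroDivisors_of_noZeroDivisors hF')
  have hF0 : F ≠ 0 := by rintro rfl; simp at hF'
  have halg : IsAlgebraic B b := by
    have h1 : IsAlgebraic B (AdjoinRoot.root F) := ⟨F, hF0, by simp [AdjoinRoot.aeval_eq]⟩
    obtain ⟨q, rfl⟩ := AdjoinRoot.mk_surjective b
    rw [← AdjoinRoot.aeval_eq]
    have h2 : Algebra.adjoin B {AdjoinRoot.root F} ≤ Subalgebra.algebraicClosure B (AdjoinRoot F) :=
      Algebra.adjoin_le (Set.singleton_subset_iff.mpr h1)
    exact h2 (aeval_mem_adjoin_singleton B _)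
  obtain ⟨β, hβ, b', hb'⟩ := halg.exists_nonzero_dvd (mem_nonZeroDivisors_of_ne_zero hb)
  let K := FractionRing B
  have hflat : Module.Flat B S := inferInstance
  have hinj : Function.Injective (algebraMap S (S ⊗[B] K)) :=
    Algebra.TensorProduct.includeLeft_injective (S := B) (IsFractionRing.injective B K)
  let t : S ⊗[B] K := algebraMap (AdjoinRoot F) S (a * b') ⊗ₜ (algebraMap B K β)⁻¹
  have hβK : algebraMap B K β ≠ 0 := by simpa using hβ
  have hβt : algebraMap B (S ⊗[B] K) β * t = algebraMap S _ (algebraMap (AdjoinRoot F) S (a * b')) := by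
    rw [IsScalarTower.algebraMap_apply B S (S ⊗[B] K)]
    simp only [t]
    rw [← Algebra.smul_def, algebraMap_smul, ← TensorProduct.tmul_smul, Algebra.smul_def,
      mul_inv_cancel₀ hβK]
    rfl
  have hβu : IsUnit (algebraMap B (S ⊗[B] K) β) := by
    have h1 : algebraMap B (S ⊗[B] K) β =
        Algebra.TensorProduct.includeRight (R := B) (A := S) (B := K) (algebraMap B K β) := by
      rw [AlgHom.commutes]
    rw [h1]
    exact (IsUnit.mk0 _ hβK).map _
  have hint : IsIntegral S t := by
    let φ : AdjoinRoot F →+* S ⊗[B] K :=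
      (algebraMap S (S ⊗[B] K)).comp (algebraMap (AdjoinRoot F) S)
    have hφβ : φ (b * b') = algebraMap B (S ⊗[B] K) β := by
      rw [← hb']
      simp only [φ, RingHom.comp_apply]
      rw [← IsScalarTower.algebraMap_apply, ← IsScalarTower.algebraMap_apply]
    have h1 := scaleRoots_eval₂_mul (p := p) φ t (b * b')
    have h2 : φ (b * b') * t = φ (b' * a) := by rw [hφβ, hβt, mul_comm b' a]; rfl
    rw [h2, eval₂_at_apply, scaleRoots_mul, scaleRoots_eval_mul, hpa, mul_zero, map_zero, hφβ] at h1
    have h3 : eval₂ φ t p = 0 := ((hβu.pow _).mul_right_eq_zero).mp h1.symm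
    refine ⟨p.map (algebraMap (AdjoinRoot F) S), hp.map _, ?_⟩
    rw [eval₂_map]
    exact h3
  obtain ⟨y, hy⟩ := (TensorProduct.toIntegralClosure_bijective_of_smooth (R := B) (S := S) (B := K)).2 ⟨t, hint⟩
  have hs : ∃ s : S, algebraMap S (S ⊗[B] K) s = t := by
    have hy' : Algebra.TensorProduct.map (AlgHom.id S S) (integralClosure B K).val y = t :=
      congrArg Subtype.val hy
    rw [← hy']
    clear hy hy'
    induction y with
    | zero => exact ⟨0, by simp⟩
    | add y z hy hz =>
      obtain ⟨s₁, h₁⟩ := hy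
      obtain ⟨s₂, h₂⟩ := hz
      exact ⟨s₁ + s₂, by rw [map_add, map_add, h₁, h₂]⟩
    | tmul y z =>
      obtain ⟨c, hc⟩ := IsIntegrallyClosed.isIntegral_iff.mp z.2
      refine ⟨c • y, ?_⟩
      simp only [Algebra.TensorProduct.algebraMap_apply, Algebra.algebraMap_self, RingHom.id_apply,
        Algebra.TensorProduct.map_tmul, AlgHom.id_apply, Subalgebra.coe_val]
      rw [← hc, TensorProduct.smul_tmul, Algebra.smul_def, mul_one]
  obtain ⟨s, hs⟩ := hs
  have hβs : algebraMap B S β * s = algebraMap (AdjoinRoot F) S (a * b') := by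
    apply hinj
    rw [← hβt, map_mul, hs, ← IsScalarTower.algebraMap_apply]
  obtain ⟨⟨c, ⟨_, n, rfl⟩⟩, hc⟩ := IsLocalization.surj (Submonoid.powers (AdjoinRoot.mk F (derivative F))) s
  refine ⟨n, c, ?_⟩
  have hb'0 : b' ≠ 0 := by
    rintro rfl
    have : Nontrivial S := hAS.nontrivial
    have : Nontrivial (S ⊗[B] K) := hinj.nontrivial
    apply hβu.ne_zero
    rw [IsScalarTower.algebraMap_apply B S (S ⊗[B] K), IsScalarTower.algebraMap_apply B (AdjoinRoot F) S,
      hb', mul_zero, map_zero, map_zero]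
  apply mul_right_cancel₀ hb'0
  apply hAS
  rw [IsScalarTower.algebraMap_apply B (AdjoinRoot F) S, hb'] at hβs
  simp only [map_mul, map_pow] at hβs hc ⊢
  linear_combination (-algebraMap (AdjoinRoot F) S (AdjoinRoot.mk F (derivative F)) ^ n)* hβs + algebraMap _ S b * algebraMap _ S b' * hc

theorem option_pderiv {k : Type*} [Field k] (i : Fin 3) (f : MvPolynomial (Fin 3) k) :
    MvPolynomial.optionEquivLeft k (Fin 2)
      (MvPolynomial.rename (finSuccEquiv' i) (MvPolynomial.pderiv i f)) =
    derivative (MvPolynomial.optionEquivLeft k (Fin 2)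
      (MvPolynomial.rename (finSuccEquiv' i) f)) := by
  induction f using MvPolynomial.induction_on with
  | C a => simp
  | add p q hp hq => simp only [map_add, hp, hq]
  | mul_X p j hp =>
    rw [Derivation.leibniz]
    simp only [map_add, map_mul, smul_eq_mul, hp, derivative_mul, MvPolynomial.rename_X]
    by_cases hij : j = i
    · subst hij
      simp
      ring
    · obtain ⟨j, rfl⟩ := Fin.exists_succAbove_eq hij
      have : MvPolynomial.pderiv i (MvPolynomial.X (i.succAbove j) : MvPolynomial (Fin 3) k) = 0 :=
        MvPolynomial.pderiv_X_of_ne hij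
      simp [this]
      ring

theorem partial_conductor {k : Type*} [Field k] (f : MvPolynomial (Fin 3) k)
    [IsDomain (MvPolynomial (Fin 3) k ⧸ Ideal.span {f})] (i : Fin 3)
    (a b : MvPolynomial (Fin 3) k ⧸ Ideal.span {f}) (hb : b ≠ 0)
    (p : (MvPolynomial (Fin 3) k ⧸ Ideal.span {f})[X]) (hp : p.Monic)
    (hpa : (p.scaleRoots b).eval a = 0) :
    ∃ (n : ℕ) (c : MvPolynomial (Fin 3) k ⧸ Ideal.span {f}),
      Ideal.Quotient.mk (Ideal.span {f}) (MvPolynomial.pderiv i f) ^ n * a = b * c := by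
  by_cases h0 : Ideal.Quotient.mk (Ideal.span {f}) (MvPolynomial.pderiv i f) = 0
  · exact ⟨1, 0, by simp [h0]⟩
  let e : MvPolynomial (Fin 3) k ≃ₐ[k] (MvPolynomial (Fin 2) k)[X] :=
    (MvPolynomial.renameEquiv k (finSuccEquiv' i)).trans (MvPolynomial.optionEquivLeft k (Fin 2))
  have he : e (MvPolynomial.pderiv i f) = derivative (e f) := option_pderiv i f
  let E : (MvPolynomial (Fin 3) k ⧸ Ideal.span {f}) ≃+* AdjoinRoot (e f) :=
    Ideal.quotientEquiv _ _ e.toRingEquiv (by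
      rw [Ideal.map_span, Set.image_singleton]; rfl)
  have hE : E (Ideal.Quotient.mk (Ideal.span {f}) (MvPolynomial.pderiv i f)) =
      AdjoinRoot.mk (e f) (derivative (e f)) := by
    rw [← he]; rfl
  have : IsDomain (AdjoinRoot (e f)) := MulEquiv.isDomain _ E.symm.toMulEquiv
  obtain ⟨n, c, h⟩ := etale_descent (e f) (by rw [← hE]; simpa using h0) (E a) (E b) (by simpa using hb)
    (p.map (E : _ →+* AdjoinRoot (e f))) (hp.map _) (by
      have h1 := map_scaleRoots p b (E : _ →+* AdjoinRoot (e f)) (by simp [hp.leadingCoeff])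
      rw [RingHom.coe_coe] at h1
      rw [← h1]
      have := eval_map_apply (E : _ →+* AdjoinRoot (e f)) (p := p.scaleRoots b) a
      rw [RingHom.coe_coe] at this
      rw [this, hpa, map_zero])
  refine ⟨n, E.symm c, E.injective ?_⟩
  simpa [hE] using h

theorem dvd_of_coprime {R : Type*} [CommRing R] [IsDomain R] [UniqueFactorizationMonoid R]
    {x y c d : R} (h : IsRelPrime x y) (hx : d ∣ x * c) (hy : d ∣ y * c) : d ∣ c := by
  classical
  let _ : GCDMonoid R := UniqueFactorizationMonoid.toGCDMonoid R
  have h1 : d ∣ gcd (x * c) (y * c) := dvd_gcd hx hy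
  have h2 : IsUnit (gcd x y) := h (gcd_dvd_left _ _) (gcd_dvd_right _ _)
  have h3 : d ∣ gcd x y * c := h1.trans (gcd_mul_right' c x y).dvd
  exact (h2.dvd_mul_left).mp h3

theorem depth_step {k : Type*} [Field k] (f : MvPolynomial (Fin 3) k) (i j l : Fin 3)
    (hij : i ≠ j) (hil : i ≠ l) (hjl : j ≠ l) (N M : ℕ)
    (c : MvPolynomial (Fin 3) k ⧸ Ideal.span {f})
    (hj : Ideal.Quotient.mk (Ideal.span {f}) (MvPolynomial.X i) ∣
      Ideal.Quotient.mk (Ideal.span {f}) (MvPolynomial.X j) ^ N * c)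
    (hl : Ideal.Quotient.mk (Ideal.span {f}) (MvPolynomial.X i) ∣
      Ideal.Quotient.mk (Ideal.span {f}) (MvPolynomial.X l) ^ M * c) :
    Ideal.Quotient.mk (Ideal.span {f}) (MvPolynomial.X i) ∣ c := by
  classical
  obtain ⟨c, rfl⟩ := Ideal.Quotient.mk_surjective c
  let φ : MvPolynomial (Fin 3) k →ₐ[k] MvPolynomial (Fin 3) k :=
    MvPolynomial.aeval (Function.update MvPolynomial.X i 0)
  have hφi : φ (MvPolynomial.X i) = 0 := by simp [φ]
  have hφ : ∀ j, i ≠ j → φ (MvPolynomial.X j) = MvPolynomial.X j := by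
    intro j hj; simp [φ, Function.update_of_ne hj.symm]
  have hsub : ∀ r, MvPolynomial.X i ∣ r - φ r := by
    intro r
    induction r using MvPolynomial.induction_on with
    | C a => simp [φ]
    | add p q hp hq =>
      rw [map_add, add_sub_add_comm]; exact dvd_add hp hq
    | mul_X p n hp =>
      by_cases h : i = n
      · subst h; rw [map_mul, hφi]; simp
      · rw [map_mul, hφ n h, ← sub_mul]; exact hp.mul_right _
  have key : ∀ m n, i ≠ m → Ideal.Quotient.mk (Ideal.span {f}) (MvPolynomial.X i) ∣
      Ideal.Quotient.mk (Ideal.span {f}) (MvPolynomial.X m) ^ n * Ideal.Quotient.mk (Ideal.span {f}) c →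
      φ f ∣ MvPolynomial.X m ^ n * φ c := by
    intro m n hm ⟨u, hu⟩
    obtain ⟨u, rfl⟩ := Ideal.Quotient.mk_surjective u
    rw [← map_pow, ← map_mul, ← map_mul, Ideal.Quotient.mk_eq_mk_iff_sub_mem,
      Ideal.mem_span_singleton] at hu
    have := map_dvd φ hu
    simpa [hφi, hφ m hm] using this
  have hrel : IsRelPrime (MvPolynomial.X j ^ N : MvPolynomial (Fin 3) k) (MvPolynomial.X l ^ M) := by
    apply IsRelPrime.pow
    rw [(MvPolynomial.X_prime (R := k) (i := j)).irreducible.isRelPrime_iff_not_dvd, MvPolynomial.X_dvd_X]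
    simpa using hjl
  obtain ⟨w, hw⟩ := dvd_of_coprime hrel (key j N hij hj) (key l M hil hl)
  have h1 : MvPolynomial.X i ∣ c - f * w := by
    have : c - f * w = (c - φ c) - (f - φ f) * w := by rw [hw]; ring
    rw [this]
    exact dvd_sub (hsub c) ((hsub f).mul_right _)
  have h2 := map_dvd (Ideal.Quotient.mk (Ideal.span {f})) h1
  have h3 : Ideal.Quotient.mk (Ideal.span {f}) f = 0 := Ideal.Quotient.mk_singleton_self f
  simpa [h3] using h2

/-- The homogeneous coordinate ring `k[X₀,X₁,X₂]/(f)` of a smooth plane curve `V(f) ⊆ ℙ²_k`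
over an algebraically closed field is an integrally closed domain (projective normality). -/
theorem smooth_plane_curve_coordinate_ring_integrally_closed
    (k : Type*) [Field k] [IsAlgClosed k] (d : ℕ) (hd : 1 ≤ d)
    (f : MvPolynomial (Fin 3) k) (hf : f.IsHomogeneous d)
    (hirr : Irreducible f)
    (hsm : ∀ v : Fin 3 → k, MvPolynomial.eval v f = 0 →
      (∀ i : Fin 3, MvPolynomial.eval v (MvPolynomial.pderiv i f) = 0) → v = 0) :
    IsDomain (MvPolynomial (Fin 3) k ⧸ Ideal.span {f}) ∧
      IsIntegrallyClosed (MvPolynomial (Fin 3) k ⧸ Ideal.span {f}) := by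
  have hprime : (Ideal.span {f}).IsPrime :=
    (Ideal.span_singleton_prime hirr.ne_zero).mpr hirr.prime
  have hdom : IsDomain (MvPolynomial (Fin 3) k ⧸ Ideal.span {f}) := Ideal.Quotient.isDomain _
  refine ⟨hdom, ?_⟩
  set A := MvPolynomial (Fin 3) k ⧸ Ideal.span {f} with hA
  set π : MvPolynomial (Fin 3) k →+* A := Ideal.Quotient.mk (Ideal.span {f}) with hπ
  rw [isIntegrallyClosed_iff (FractionRing A)]
  intro x hx
  obtain ⟨a, b, hb, rfl⟩ := IsFractionRing.div_surjective (A := A) x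
  have hb0 : b ≠ 0 := nonZeroDivisors.ne_zero hb
  obtain ⟨p, hp, hpx⟩ := hx
  have hpa : (p.scaleRoots b).eval a = 0 := by
    apply IsFractionRing.injective A (FractionRing A)
    have := scaleRoots_eval₂_eq_zero_of_eval₂_div_eq_zero
      (IsFractionRing.injective A (FractionRing A)) hpx hb
    rw [eval₂_at_apply] at this
    rw [map_zero]
    exact this
  suffices hdvd : b ∣ a by
    obtain ⟨c, rfl⟩ := hdvd
    refine ⟨c, ?_⟩
    have : algebraMap A (FractionRing A) b ≠ 0 := by simpa using hb0
    rw [map_mul, mul_div_cancel_left₀ _ this]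
  let J : Ideal (MvPolynomial (Fin 3) k) :=
    Ideal.comap π (Submodule.comap (LinearMap.mulRight A a) (Ideal.span {b} : Ideal A))
  have hJ : ∀ r, r ∈ J ↔ b ∣ π r * a := by
    intro r
    simp [J, Ideal.mem_span_singleton]
  have hXmem : ∀ i : Fin 3, (MvPolynomial.X i : MvPolynomial (Fin 3) k) ∈ J.radical := by
    intro i
    let T : Set (MvPolynomial (Fin 3) k) := insert f (Set.range fun i => MvPolynomial.pderiv i f)
    have h1 : (MvPolynomial.X i : MvPolynomial (Fin 3) k) ∈ (Ideal.span T).radical := by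
      rw [← MvPolynomial.vanishingIdeal_zeroLocus_eq_radical (K := k), MvPolynomial.mem_vanishingIdeal_iff]
      intro v hv
      rw [MvPolynomial.zeroLocus_span] at hv
      have : v = 0 := hsm v (hv f (Set.mem_insert _ _))
        (fun i => hv _ (Set.mem_insert_of_mem _ ⟨i, rfl⟩))
      simp [this]
    have h2 : Ideal.span T ≤ J.radical := by
      rw [Ideal.span_le]
      rintro _ (rfl | ⟨j, rfl⟩)
      · apply Ideal.le_radical
        rw [hJ, hπ, Ideal.Quotient.mk_singleton_self, zero_mul]
        exact dvd_zero b
      · obtain ⟨n, c, h⟩ := partial_conductor f j a b hb0 p hp hpa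
        refine ⟨n, ?_⟩
        rw [hJ, map_pow]
        exact ⟨c, h⟩
    have h3 := Ideal.radical_mono h2 h1
    rwa [Ideal.radical_idem] at h3
  have hX : ∀ i : Fin 3, ∃ n, b ∣ π (MvPolynomial.X i) ^ n * a := by
    intro i
    obtain ⟨n, hn⟩ := hXmem i
    exact ⟨n, by rw [hJ, map_pow] at hn; exact hn⟩
  have main : ∀ i j l : Fin 3, i ≠ j → i ≠ l → j ≠ l → π (MvPolynomial.X i) ≠ 0 → b ∣ a := by
    intro i j l hij hil hjl hi0
    obtain ⟨n, hn⟩ := hX i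
    obtain ⟨N, c₁, h₁⟩ := hX j
    obtain ⟨M, c₂, h₂⟩ := hX l
    induction n with
    | zero => simpa using hn
    | succ n ih =>
      apply ih
      obtain ⟨c, hc⟩ := hn
      have e₁ : π (MvPolynomial.X i) ∣ π (MvPolynomial.X j) ^ N * c := by
        refine ⟨π (MvPolynomial.X i) ^ n * c₁, mul_left_cancel₀ hb0 ?_⟩
        linear_combination (π (MvPolynomial.X i) ^ (n + 1)) * h₁ - π (MvPolynomial.X j) ^ N * hc
      have e₂ : π (MvPolynomial.X i) ∣ π (MvPolynomial.X l) ^ M * c := by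
        refine ⟨π (MvPolynomial.X i) ^ n * c₂, mul_left_cancel₀ hb0 ?_⟩
        linear_combination (π (MvPolynomial.X i) ^ (n + 1)) * h₂ - π (MvPolynomial.X l) ^ M * hc
      obtain ⟨c', rfl⟩ := depth_step f i j l hij hil hjl N M c e₁ e₂
      refine ⟨c', mul_left_cancel₀ hi0 ?_⟩
      linear_combination hc
  by_cases h0 : π (MvPolynomial.X 0) = 0
  · refine main 1 0 2 (by decide) (by decide) (by decide) ?_
    intro h1
    rw [hπ, Ideal.Quotient.eq_zero_iff_mem, Ideal.mem_span_singleton] at h0 h1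
    have a0 := hirr.associated_of_dvd (MvPolynomial.X_prime (R := k) (i := (0 : Fin 3))).irreducible h0
    have := a0.symm.dvd.trans h1
    rw [MvPolynomial.X_dvd_X] at this
    simp at this
  · exact main 0 1 2 (by decide) (by decide) (by decide) h0
end

section
/- Let $k$ be an algebraically closed field and let $C \subset \mathbb{P}^2_k$ be a smooth plane curve of degree $d$. Let $p_1, \dots, p_m$ be distinct points of $C$ with $m \leq d-2$, and let $\mathcal{L} = \mathcal{O}_C(p_1 + \cdots + p_m)$. Then $h^0(C, \mathcal{L}) = 1$. -/
/-!
Framework: a smooth plane curve of degree `d` over an algebraically closed field `k` is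
`C = V(f) ⊆ ℙ²_k` for `f ∈ k[X₀,X₁,X₂]` homogeneous of degree `d` whose only common zero
with its partial derivatives is the origin.  We realize the points of `C`, the order of
vanishing at a point of `C` of a homogeneous polynomial, Riemann–Roch spaces `L(D)` of
divisors on `C` (inside the fraction field `F` of the homogeneous coordinate ring of `C`,
as the degree-zero fractions `g/h` with `div(g/h) + D ≥ 0`), and `h⁰(C, O_C(D)) = dim L(D)`.
-/

noncomputable section PlaneCurve

variable {k : Type*} [Field k]

/-- The points of the plane curve `V(f) ⊆ ℙ²_k`: points of the projectivization of `k³`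
whose (fixed) representative vector is a zero of `f`.  (For homogeneous `f` this is
independent of the representative.) -/
def PlanePoint (f : MvPolynomial (Fin 3) k) : Type _ :=
  { p : Projectivization k (Fin 3 → k) // MvPolynomial.eval p.rep f = 0 }

open Classical in
/-- The inhomogeneous polynomial `ℓ - 1`, where `ℓ` is a linear form with `ℓ(v) = 1`;
the hyperplane `ℓ = 1` is an affine chart of `ℙ²` containing the point `[v]`. -/
def slicePoly (v : Fin 3 → k) : MvPolynomial (Fin 3) k :=
  if hv : ∃ i, v i ≠ 0 then
    MvPolynomial.C (v hv.choose)⁻¹ * MvPolynomial.X hv.choose - 1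
  else 0

/-- The order of vanishing, at the point `p` of the curve `C = V(f)`, of the restriction
to `C` of a homogeneous polynomial `g`: in the affine chart `ℓ = 1` of `ℙ²` containing `p`,
it is the largest `n` such that, locally at `p` (i.e., after multiplying by some polynomial
not vanishing at `p`), `g` lies in the `n`-th power of the maximal ideal of `p` on the
affine curve `{f = 0, ℓ = 1}`. -/
def ordAt (f : MvPolynomial (Fin 3) k) (p : PlanePoint f) (g : MvPolynomial (Fin 3) k) : ℕ :=
  sSup { n : ℕ | ∃ h : MvPolynomial (Fin 3) k, MvPolynomial.eval p.1.rep h ≠ 0 ∧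
    h * g ∈ Ideal.span {f, slicePoly p.1.rep} +
      (RingHom.ker (MvPolynomial.eval p.1.rep)) ^ n }

variable (F : Type*) [CommRing F]

/-- The Riemann–Roch space `L(D) = H⁰(C, O_C(D))` of a divisor `D` on the smooth plane
curve `C = V(f)`, realized inside the fraction field `F` of the homogeneous coordinate ring
`k[X₀,X₁,X₂]/(f)` of `C`: it consists of `0` together with all degree-zero fractions `g/h`
(`g`, `h` homogeneous of the same degree, neither divisible by `f`) with `div(g/h) + D ≥ 0`. -/
def RRspace (f : MvPolynomial (Fin 3) k)
    [Algebra (MvPolynomial (Fin 3) k ⧸ Ideal.span {f}) F]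
    (D : PlanePoint f → ℤ) : Set F :=
  {φ | φ = 0 ∨ ∃ (e : ℕ) (g h : MvPolynomial (Fin 3) k),
    g.IsHomogeneous e ∧ h.IsHomogeneous e ∧ ¬ f ∣ g ∧ ¬ f ∣ h ∧
    φ * algebraMap (MvPolynomial (Fin 3) k ⧸ Ideal.span {f}) F
          (Ideal.Quotient.mk (Ideal.span {f}) h)
      = algebraMap (MvPolynomial (Fin 3) k ⧸ Ideal.span {f}) F
          (Ideal.Quotient.mk (Ideal.span {f}) g) ∧
    ∀ p : PlanePoint f, 0 ≤ (ordAt f p g : ℤ) - (ordAt f p h : ℤ) + D p}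

/-- `h⁰(C, O_C(D))`: the dimension over `k` of the Riemann–Roch space of the divisor `D`. -/
def h0 (f : MvPolynomial (Fin 3) k)
    [Algebra (MvPolynomial (Fin 3) k ⧸ Ideal.span {f}) F] [Algebra k F]
    (D : PlanePoint f → ℤ) : ℕ :=
  Module.finrank k (Submodule.span k (RRspace F f D))

end PlaneCurve


open MvPolynomial

namespace PC

section
variable {k : Type*} [Field k]

lemma aeval_mul_hom {T : Type*} [CommRing T] [Algebra k T] {n : ℕ} {φ : MvPolynomial (Fin 3) k}
    (hφ : φ.IsHomogeneous n) (c : T) (g : Fin 3 → T) :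
    aeval (fun i => c * g i) φ = c ^ n * aeval g φ := by
  rw [aeval_def, aeval_def, eval₂_eq', eval₂_eq', Finset.mul_sum]
  refine Finset.sum_congr rfl fun s hs => ?_
  have h := hφ (mem_support_iff.1 hs)
  have h2 : ∑ i, s i = n := by
    rw [← h, Finsupp.weight_apply, Finsupp.sum_fintype] <;> simp
  simp only [mul_pow, Finset.prod_mul_distrib, Finset.prod_pow_eq_pow_sum, h2]
  ring

lemma eval_smul_hom {n : ℕ} {φ : MvPolynomial (Fin 3) k}
    (hφ : φ.IsHomogeneous n) (c : k) (g : Fin 3 → k) :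
    eval (c • g) φ = c ^ n * eval g φ := by
  have := aeval_mul_hom (T := k) hφ c g
  simp only [MvPolynomial.aeval_eq_eval] at this
  exact this

/-- linear form with given coefficients -/
noncomputable def lin (c : Fin 3 → k) : MvPolynomial (Fin 3) k := ∑ i, C (c i) * X i

lemma lin_hom (c : Fin 3 → k) : (lin c).IsHomogeneous 1 := by
  refine IsHomogeneous.sum _ _ _ fun i _ => ?_
  simpa using (isHomogeneous_C (Fin 3) (c i)).mul (isHomogeneous_X k i)

lemma eval_lin (c x : Fin 3 → k) : eval x (lin c) = ∑ i, c i * x i := by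
  simp [lin]

lemma lin_ker (c : Fin 3 → k) (i : Fin 3) (hi : c i ≠ 0) :
    ∃ ρ : MvPolynomial (Fin 3) k →ₐ[k] MvPolynomial (Fin 3) k,
      (∀ p, ρ p = 0 ↔ lin c ∣ p) ∧
      (∀ p x, eval x (ρ p) = eval (fun j => x j - if j = i then (c i)⁻¹ * eval x (lin c) else 0) p) := by
  refine ⟨aeval (fun j => X j - if j = i then C (c i)⁻¹ * lin c else 0), ?_, ?_⟩
  · have key : ∀ p, lin c ∣ p - aeval (R := k) (fun j => X j - if j = i then C (c i)⁻¹ * lin c else 0) p := by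
      intro p
      induction p using MvPolynomial.induction_on with
      | C a => simp
      | add p q hp hq =>
        rw [map_add]
        convert dvd_add hp hq using 1
        ring
      | mul_X p j hp =>
        rw [map_mul, aeval_X]
        obtain ⟨r, hr⟩ := hp
        rw [sub_eq_iff_eq_add] at hr
        by_cases hj : j = i
        · rw [if_pos hj]
          refine ⟨r * X j + (aeval (R := k) (fun j => X j - if j = i then C (c i)⁻¹ * lin c else 0) p) * C (c i)⁻¹, ?_⟩
          conv_lhs => enter [1]; rw [hr]
          ring
        · rw [if_neg hj]
          refine ⟨r * X j, ?_⟩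
          conv_lhs => enter [1]; rw [hr]
          ring
    intro p
    constructor
    · intro h
      have := key p
      rwa [h, sub_zero] at this
    · rintro ⟨q, rfl⟩
      rw [map_mul]
      have : aeval (R := k) (fun j => X j - if j = i then C (c i)⁻¹ * lin c else 0) (lin c) = (0 : MvPolynomial (Fin 3) k) := by
        conv_lhs => enter [2]; rw [lin]
        simp only [map_sum, map_mul, aeval_X, aeval_C]
        simp only [mul_sub, Finset.sum_sub_distrib, mul_ite, mul_zero, Finset.sum_ite_eq', 
          Finset.mem_univ, if_true, ← mul_assoc, algebraMap_eq, ← C_mul, mul_inv_cancel₀ hi]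
        simp [lin]
      rw [this, zero_mul]
  · intro p x
    induction p using MvPolynomial.induction_on with
    | C a => simp
    | add p q hp hq => simp only [map_add, hp, hq]
    | mul_X p j hp =>
      rw [map_mul, map_mul, hp, map_mul, aeval_X, eval_X]
      congr 1
      by_cases hj : j = i <;> simp [hj]

lemma exists_ne {c : Fin 3 → k} (hc : c ≠ 0) : ∃ i, c i ≠ 0 := by
  by_contra! h
  exact hc (funext h)

lemma lin_ne {c : Fin 3 → k} (hc : c ≠ 0) : lin c ≠ 0 := by
  obtain ⟨i, hi⟩ := exists_ne hc
  intro h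
  have := eval_lin c (Pi.single i 1)
  rw [h] at this
  simp [Pi.single_apply] at this
  exact hi this.symm

lemma lin_prime {c : Fin 3 → k} (hc : c ≠ 0) : Prime (lin c) := by
  obtain ⟨i, hi⟩ := exists_ne hc
  obtain ⟨ρ, h1, -⟩ := lin_ker c i hi
  refine ⟨lin_ne hc, ?_, ?_⟩
  · intro h
    have := (h1 1).2 (h.dvd)
    simp at this
  · intro a b h
    rw [← h1, map_mul, mul_eq_zero, h1, h1] at h
    exact h

lemma lin_dvd_of_vanish [Infinite k] {c : Fin 3 → k} (hc : c ≠ 0) (B : MvPolynomial (Fin 3) k)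
    (hB : ∀ x, eval x (lin c) = 0 → eval x B = 0) : lin c ∣ B := by
  obtain ⟨i, hi⟩ := exists_ne hc
  obtain ⟨ρ, h1, h2⟩ := lin_ker c i hi
  rw [← h1]
  apply MvPolynomial.funext
  intro x
  rw [h2, map_zero]
  apply hB
  rw [eval_lin]
  simp only [mul_sub, Finset.sum_sub_distrib, mul_ite, mul_zero, Finset.sum_ite_eq', Finset.mem_univ, if_true,
    ← mul_assoc, mul_inv_cancel₀ hi, eval_lin, one_mul, sub_self]

/-- Ideal membership with two forms (the graded depth argument). -/
lemma exists_Z [Infinite k] (f : MvPolynomial (Fin 3) k) (hf : Prime f) (d : ℕ) (hfd : f.IsHomogeneous d)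
    (hd : 2 ≤ d) :
    ∃ Z0 Z1 : MvPolynomial (Fin 3) k, eval 0 Z0 = 0 ∧ eval 0 Z1 = 0 ∧
      ∀ G h : MvPolynomial (Fin 3) k, ¬ f ∣ h → Z0 * G ∈ Ideal.span {h, f} → Z1 * G ∈ Ideal.span {h, f} →
        G ∈ Ideal.span {h, f} := by
  have hf0 := hf.ne_zero
  obtain ⟨e0, e1, he⟩ : ∃ e0 e1 : k, eval ![e0, e1, 1] f ≠ 0 := by
    by_contra! hcon
    have : X 2 * f = 0 := by
      apply MvPolynomial.funext
      intro x
      rw [map_mul, map_zero, eval_X]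
      by_cases hx : x 2 = 0
      · simp [hx]
      · have h1 := hcon ((x 2)⁻¹ * x 0) ((x 2)⁻¹ * x 1)
        have h2 : (![(x 2)⁻¹ * x 0, (x 2)⁻¹ * x 1, 1] : Fin 3 → k) = (x 2)⁻¹ • x := by
          ext j; fin_cases j <;> simp [hx]
        rw [h2] at h1
        rw [eval_smul_hom hfd] at h1
        rw [(mul_eq_zero.1 h1).resolve_left (pow_ne_zero _ (inv_ne_zero hx)), mul_zero]
    exact hf0 ((mul_eq_zero.1 this).resolve_left (X_ne_zero 2))
  set Z0 : MvPolynomial (Fin 3) k := lin ![1, 0, -e0] with hZ0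
  have hZ0p : Prime Z0 := lin_prime (by intro h; simpa using congrFun h 0)
  set Z1 : MvPolynomial (Fin 3) k := lin ![0, 1, -e1] with hZ1
  have hZ01 : ¬ Z0 ∣ Z1 := by
    rintro ⟨q, hq⟩
    have := congrArg (eval ![0, 1, 0]) hq
    rw [map_mul, hZ0, hZ1, eval_lin, eval_lin] at this
    simp [Fin.sum_univ_three] at this
  have hfZ0 : ¬ f ∣ Z0 := by
    rintro ⟨q, hq⟩
    have h1 := totalDegree_mul_of_isDomain hf0 (f := f) (g := q) (by rintro rfl; exact hZ0p.ne_zero (by simpa using hq))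
    rw [← hq, (lin_hom _).totalDegree hZ0p.ne_zero, hfd.totalDegree hf0] at h1
    omega
  have key : ∀ c, c * f ∈ Ideal.span {Z0, Z1} → c ∈ Ideal.span {Z0, Z1} := by
    set ρ : MvPolynomial (Fin 3) k →ₐ[k] MvPolynomial (Fin 3) k := aeval ![C e0 * X 2, C e1 * X 2, X 2] with hρ
    have h1 : ∀ p, p - ρ p ∈ Ideal.span {Z0, Z1} := by
      intro p
      rw [← Ideal.Quotient.eq]
      have : (Ideal.Quotient.mkₐ k (Ideal.span {Z0, Z1})) = (Ideal.Quotient.mkₐ k (Ideal.span {Z0, Z1})).comp ρ := by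
        apply MvPolynomial.algHom_ext
        intro i
        rw [AlgHom.comp_apply, hρ, aeval_X]
        refine (Ideal.Quotient.eq).2 ?_
        fin_cases i
        · have : Z0 ∈ Ideal.span {Z0, Z1} := Ideal.subset_span (by simp)
          convert this using 1
          simp [hZ0, lin, Fin.sum_univ_three]; ring
        · have : Z1 ∈ Ideal.span {Z0, Z1} := Ideal.subset_span (by simp)
          convert this using 1
          simp [hZ1, lin, Fin.sum_univ_three]; ring
        · simp
      exact congrArg (fun g => g p) this
    have h2 : ∀ p ∈ Ideal.span {Z0, Z1}, ρ p = 0 := by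
      intro p hp
      obtain ⟨a, b, rfl⟩ := Ideal.mem_span_pair.1 hp
      simp [hZ0, hZ1, hρ, lin, Fin.sum_univ_three]
    intro c hc
    have h3 := h2 _ hc
    rw [map_mul, mul_eq_zero] at h3
    rcases h3 with h3 | h3
    · simpa [h3] using h1 c
    · exfalso
      apply he
      obtain ⟨a, b, hab⟩ := Ideal.mem_span_pair.1 (h1 f)
      rw [h3, sub_zero] at hab
      rw [← hab]
      simp [hZ0, hZ1, eval_lin, Fin.sum_univ_three]
  refine ⟨Z0, Z1, by rw [hZ0, eval_lin]; simp, by rw [hZ1, eval_lin]; simp, ?_⟩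
  intro G h hh h0 h1
  obtain ⟨a0, b0, h0⟩ := Ideal.mem_span_pair.1 h0
  obtain ⟨a1, b1, h1⟩ := Ideal.mem_span_pair.1 h1
  obtain ⟨c, hc⟩ : f ∣ Z1 * a0 - Z0 * a1 := by
    refine (hf.dvd_or_dvd (a := h) ⟨Z0 * b1 - Z1 * b0, ?_⟩).resolve_left hh
    linear_combination Z1 * h0 - Z0 * h1
  have hc' : c * f ∈ Ideal.span {Z0, Z1} := Ideal.mem_span_pair.2 ⟨-a1, a0, by linear_combination hc⟩
  obtain ⟨c0, c1, hcc⟩ := Ideal.mem_span_pair.1 (key c hc')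
  obtain ⟨a, ha⟩ : Z0 ∣ a0 - c1 * f := by
    refine (hZ0p.dvd_or_dvd (a := Z1) ⟨a1 + c0 * f, ?_⟩).resolve_left hZ01
    linear_combination hc - f * hcc
  obtain ⟨b, hb⟩ : f ∣ G - a * h := by
    refine (hf.dvd_or_dvd (a := Z0) ⟨b0 + c1 * h, ?_⟩).resolve_left hfZ0
    linear_combination - h0 + h * ha
  exact Ideal.mem_span_pair.2 ⟨a, b, by linear_combination -hb⟩

end
end PC

namespace PC
section
variable {k : Type*} [Field k]

/-- maximal ideal of the point v -/
noncomputable abbrev mI (v : Fin 3 → k) : Ideal (MvPolynomial (Fin 3) k) := RingHom.ker (eval v)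

/-- ideal of the affine slice of the curve -/
noncomputable abbrev sI (f : MvPolynomial (Fin 3) k) (v : Fin 3 → k) : Ideal (MvPolynomial (Fin 3) k) :=
  Ideal.span {f, slicePoly v}

lemma slice_form {v : Fin 3 → k} (hv : v ≠ 0) :
    ∃ i, v i ≠ 0 ∧ slicePoly v = C (v i)⁻¹ * X i - 1 := by
  have h := exists_ne hv
  refine ⟨h.choose, h.choose_spec, ?_⟩
  rw [slicePoly, dif_pos h]

lemma sI_le {f : MvPolynomial (Fin 3) k} {v : Fin 3 → k} (hv : v ≠ 0) (hfv : eval v f = 0) :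
    sI f v ≤ mI v := by
  obtain ⟨i, hi, hs⟩ := slice_form hv
  rw [Ideal.span_le]
  rintro x (rfl | rfl)
  · exact hfv
  · simp [hs, RingHom.mem_ker, hi]

lemma mem_of_mul_mem {f : MvPolynomial (Fin 3) k} {v : Fin 3 → k} {u g : MvPolynomial (Fin 3) k} {n : ℕ}
    (hu : eval v u ≠ 0) (h : u * g ∈ sI f v + (mI v) ^ n) : g ∈ sI f v + (mI v) ^ n := by
  -- invert u modulo mI ^ n
  have h1 : ∃ w, 1 - w * u ∈ (mI v) ^ n := by
    have h2 : 1 - C (eval v u)⁻¹ * u ∈ mI v := by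
      simp [RingHom.mem_ker, hu]
    have h3 := Ideal.pow_mem_pow h2 n
    have h4 : (C (eval v u)⁻¹ * u) ∣ 1 - (1 - C (eval v u)⁻¹ * u) ^ n := by
      have := sub_dvd_pow_sub_pow 1 (1 - C (eval v u)⁻¹ * u) n
      rwa [one_pow, sub_sub_cancel] at this
    obtain ⟨r, hr⟩ := h4
    refine ⟨C (eval v u)⁻¹ * r, ?_⟩
    convert h3 using 1
    linear_combination hr
  obtain ⟨w, hw⟩ := h1
  have h5 : g = w * (u * g) + g * (1 - w * u) := by ring
  rw [h5]
  exact Ideal.add_mem _ (Ideal.mul_mem_left _ _ h) (Ideal.mul_mem_left _ _ (Ideal.mem_sup_right hw))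

lemma ordAt_eq (f : MvPolynomial (Fin 3) k) (p : PlanePoint f) (g : MvPolynomial (Fin 3) k) :
    ordAt f p g = sSup {n : ℕ | g ∈ sI f p.1.rep + (mI p.1.rep) ^ n} := by
  rw [ordAt]
  congr 1
  ext n
  constructor
  · rintro ⟨h, h1, h2⟩
    exact mem_of_mul_mem h1 h2
  · intro h
    exact ⟨1, by simp, by simpa using h⟩

/-- affine linear form at v -/
noncomputable def dl (v c : Fin 3 → k) : MvPolynomial (Fin 3) k := ∑ i, C (c i) * (X i - C (v i))

lemma X_sub_mem (v : Fin 3 → k) (i : Fin 3) : X i - C (v i) ∈ mI v := by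
  simp [RingHom.mem_ker]

lemma dl_mem (v c : Fin 3 → k) : dl v c ∈ mI v :=
  Ideal.sum_mem _ fun i _ => Ideal.mul_mem_left _ _ (X_sub_mem v i)

lemma taylor (v : Fin 3 → k) (F : MvPolynomial (Fin 3) k) :
    F - C (eval v F) - dl v (fun i => eval v (pderiv i F)) ∈ (mI v) ^ 2 := by
  induction F using MvPolynomial.induction_on with
  | C a => simp [dl]
  | add p q hp hq =>
    convert Ideal.add_mem _ hp hq using 1
    simp only [dl, map_add, add_mul, Finset.sum_add_distrib]
    ring
  | mul_X p j hp =>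
    have h1 := Ideal.mul_mem_left _ (X j) hp
    have h2 : dl v (fun i => eval v (pderiv i p)) * (X j - C (v j)) ∈ (mI v) ^ 2 := by
      rw [pow_two]
      exact Ideal.mul_mem_mul (dl_mem _ _) (X_sub_mem v j)
    convert Ideal.add_mem _ h1 h2 using 1
    have h3 : dl v (fun i => eval v (pderiv i (p * X j))) =
        C (v j) * dl v (fun i => eval v (pderiv i p)) + C (eval v p) * (X j - C (v j)) := by
      simp only [dl, Derivation.leibniz, pderiv_X, smul_eq_mul, map_add, map_mul, eval_X, add_mul,
        Finset.sum_add_distrib, Finset.mul_sum]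
      rw [add_comm]
      congr 1
      · exact Finset.sum_congr rfl fun i _ => by ring
      · rw [Finset.sum_eq_single j]
        · simp
        · intro i _ hij
          simp [hij.symm]
        · simp
    rw [h3]
    simp only [map_mul, eval_X]
    ring

lemma mI_eq (v : Fin 3 → k) : mI v = Ideal.span (Set.range (dl v)) ⊔ (mI v) ^ 2 := by
  apply le_antisymm
  · intro F hF
    have h1 := taylor v F
    have h2 : eval v F = 0 := hF
    rw [h2] at h1
    have h3 : F = dl v (fun i => eval v (pderiv i F)) + (F - C 0 - dl v (fun i => eval v (pderiv i F))) := by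
      simp
    rw [h3]
    exact Ideal.add_mem _ (Ideal.mem_sup_left (Ideal.subset_span ⟨_, rfl⟩)) (Ideal.mem_sup_right h1)
  · refine sup_le ?_ (Ideal.pow_le_self two_ne_zero)
    rw [Ideal.span_le]
    rintro _ ⟨c, rfl⟩
    exact dl_mem _ _

lemma dl_add (v c c' : Fin 3 → k) : dl v (c + c') = dl v c + dl v c' := by
  simp [dl, add_mul, Finset.sum_add_distrib]

lemma dl_smul (v c : Fin 3 → k) (a : k) : dl v (a • c) = C a * dl v c := by
  simp [dl, Finset.mul_sum, mul_assoc]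

lemma euler {f : MvPolynomial (Fin 3) k} {d : ℕ} (hf : f.IsHomogeneous d) (v : Fin 3 → k) :
    ∑ i, v i * eval v (pderiv i f) = d * eval v f := by
  have := congrArg (eval v) hf.sum_X_mul_pderiv
  simpa using this

lemma exists_unif {f : MvPolynomial (Fin 3) k} {d : ℕ} (hf : f.IsHomogeneous d) {v : Fin 3 → k}
    (hv : v ≠ 0) (hfv : eval v f = 0) (hs : ∃ i, eval v (pderiv i f) ≠ 0) :
    ∃ t w, eval v t = 0 ∧ eval v w ≠ 0 ∧ ∀ x ∈ mI v, w * x ∈ sI f v ⊔ Ideal.span {t} := by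
  obtain ⟨i, hi, hsl⟩ := slice_form hv
  set a : Fin 3 → k := fun i => eval v (pderiv i f) with ha
  set b : Fin 3 → k := Pi.single i (v i)⁻¹ with hb
  have hav : ∑ j, v j * a j = 0 := by rw [ha, euler hf, hfv, mul_zero]
  have hbv : ∑ j, v j * b j = 1 := by
    rw [Finset.sum_eq_single i] <;> simp +contextual [hb, hi]
  have ha0 : a ≠ 0 := by
    rintro h
    obtain ⟨j, hj⟩ := hs
    exact hj (congrFun h j)
  have hli : LinearIndependent k ![a, b] := by
    rw [LinearIndependent.pair_iff]
    intro s t hst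
    have h1 : t = 0 := by
      have : ∑ j, v j * (s • a + t • b) j = 0 := by rw [hst]; simp
      simp only [Pi.add_apply, Pi.smul_apply, smul_eq_mul, mul_add, Finset.sum_add_distrib] at this
      have e1 : ∑ j, v j * (s * a j) = s * ∑ j, v j * a j := by
        rw [Finset.mul_sum]; exact Finset.sum_congr rfl fun j _ => by ring
      have e2 : ∑ j, v j * (t * b j) = t * ∑ j, v j * b j := by
        rw [Finset.mul_sum]; exact Finset.sum_congr rfl fun j _ => by ring
      rw [e1, e2, hav, hbv] at this
      simpa using this
    subst h1
    simp only [zero_smul, add_zero] at hst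
    exact ⟨(smul_eq_zero.1 hst).resolve_right ha0, rfl⟩
  obtain ⟨c, hc⟩ := exists_linearIndependent_snoc_of_lt_rank hli (by rw [rank_fun']; norm_cast)
  have hspan := hc.span_eq_top_of_card_eq_finrank (by simp)
  set I := sI f v ⊔ Ideal.span {dl v c} with hI
  have hIm : I ≤ mI v := sup_le (sI_le hv hfv) (by
    rw [Ideal.span_le]; rintro x rfl; exact dl_mem _ _)
  have hda : dl v a ∈ I ⊔ (mI v) ^ 2 := by
    have h1 := taylor v f
    rw [hfv] at h1
    have h3 : dl v a = f - (f - C 0 - dl v a) := by simp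
    rw [h3]
    exact Ideal.sub_mem _ (Ideal.mem_sup_left (Ideal.mem_sup_left (Ideal.subset_span (by simp))))
      (Ideal.mem_sup_right h1)
  have hdb : dl v b ∈ I ⊔ (mI v) ^ 2 := by
    have h3 : dl v b = slicePoly v := by
      rw [hsl, dl, Finset.sum_eq_single i]
      · simp only [hb, Pi.single_eq_same, mul_sub, ← C_mul]
        simp [hi]
      · intro j _ hj; simp [hb, hj]
      · simp
    rw [h3]
    exact Ideal.mem_sup_left (Ideal.mem_sup_left (Ideal.subset_span (by simp)))
  have hdc : dl v c ∈ I ⊔ (mI v) ^ 2 :=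
    Ideal.mem_sup_left (Ideal.mem_sup_right (Ideal.subset_span (by simp)))
  have hall : ∀ x, dl v x ∈ I ⊔ (mI v) ^ 2 := by
    intro x
    have hx : x ∈ Submodule.span k (Set.range (Fin.snoc ![a, b] c : Fin 3 → Fin 3 → k)) := by
      rw [hspan]; trivial
    induction hx using Submodule.span_induction with
    | mem x hx =>
      obtain ⟨j, rfl⟩ := hx
      fin_cases j
      · exact hda
      · exact hdb
      · exact hdc
    | zero => simp [dl]
    | add x y _ _ hx hy => rw [dl_add]; exact Ideal.add_mem _ hx hy
    | smul r x _ hx => rw [dl_smul]; exact Ideal.mul_mem_left _ _ hx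
  have hle : mI v ≤ I ⊔ (mI v) • (mI v) := by
    conv_lhs => rw [mI_eq v]
    rw [smul_eq_mul, ← pow_two]
    refine sup_le ?_ le_sup_right
    rw [Ideal.span_le]
    rintro _ ⟨x, rfl⟩
    exact hall x
  -- Nakayama in the quotient module
  have hmap : (mI v).map (Ideal.Quotient.mk I) ≤ (mI v).map (Ideal.Quotient.mk I) • (mI v).map (Ideal.Quotient.mk I) := by
    rw [smul_eq_mul, ← Ideal.map_mul]
    refine (Ideal.map_mono hle).trans ?_
    rw [Ideal.map_sup, Ideal.map_quotient_self, bot_sup_eq, smul_eq_mul]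
  obtain ⟨r, hr1, hr2⟩ := Submodule.exists_sub_one_mem_and_smul_eq_zero_of_fg_of_le_smul _ _
    (IsNoetherian.noetherian ((mI v).map (Ideal.Quotient.mk I))) hmap
  obtain ⟨w, rfl⟩ := Ideal.Quotient.mk_surjective r
  refine ⟨dl v c, w, dl_mem v c, ?_, ?_⟩
  · intro hw
    rw [← map_one (Ideal.Quotient.mk I), ← map_sub, Ideal.mem_quotient_iff_mem hIm] at hr1
    have : eval v (w - 1) = 0 := hr1
    rw [map_sub, hw, map_one] at this
    norm_num at this
  · intro x hx
    have := hr2 _ (Ideal.mem_map_of_mem _ hx)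
    rwa [smul_eq_mul, ← map_mul, Ideal.Quotient.eq_zero_iff_mem] at this

end
end PC

namespace PC
section
variable {k : Type*} [Field k]

lemma homogenize (i : Fin 3) (a : k) (ha : a ≠ 0) (s : MvPolynomial (Fin 3) k) :
    ∃ N, ∀ M ≥ N, ∃ t : MvPolynomial (Fin 3) k, t.IsHomogeneous M ∧
      (algebraMap _ (FractionRing (MvPolynomial (Fin 3) k)) t =
        (algebraMap _ _ (C a * X i)) ^ M *
          aeval (R := k) (fun j => (algebraMap _ (FractionRing (MvPolynomial (Fin 3) k)) (C a * X i))⁻¹ *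
            algebraMap (MvPolynomial (Fin 3) k) _ (X j)) s) ∧
      ∀ x : Fin 3 → k, a * x i = 1 → eval x t = eval x s := by
  have hl : algebraMap _ (FractionRing (MvPolynomial (Fin 3) k)) (C a * X i) ≠ 0 := by
    rw [Ne, FaithfulSMul.algebraMap_eq_zero_iff]
    exact mul_ne_zero (by simpa using ha) (X_ne_zero i)
  have hlh : (C a * X i : MvPolynomial (Fin 3) k).IsHomogeneous 1 := by
    simpa using (isHomogeneous_C (Fin 3) a).mul (isHomogeneous_X k i)
  induction s using MvPolynomial.induction_on with
  | C b =>
    refine ⟨0, fun M _ => ⟨(C a * X i) ^ M * C b, ?_, ?_, ?_⟩⟩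
    · simpa using (hlh.pow M).mul (isHomogeneous_C (Fin 3) b)
    · rw [map_mul, map_pow, aeval_C]
      congr 1
    · intro x hx
      simp [hx]
  | add p q hp hq =>
    obtain ⟨N1, h1⟩ := hp
    obtain ⟨N2, h2⟩ := hq
    refine ⟨max N1 N2, fun M hM => ?_⟩
    obtain ⟨t1, a1, b1, c1⟩ := h1 M (le_trans (le_max_left _ _) hM)
    obtain ⟨t2, a2, b2, c2⟩ := h2 M (le_trans (le_max_right _ _) hM)
    refine ⟨t1 + t2, a1.add a2, ?_, ?_⟩
    · rw [map_add, b1, b2, map_add, mul_add]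
    · intro x hx
      rw [map_add, map_add, c1 x hx, c2 x hx]
  | mul_X p j hp =>
    obtain ⟨N1, h1⟩ := hp
    refine ⟨N1 + 1, fun M hM => ?_⟩
    obtain ⟨M, rfl⟩ : ∃ M', M = M' + 1 := ⟨M - 1, by omega⟩
    obtain ⟨t1, a1, b1, c1⟩ := h1 M (by omega)
    refine ⟨t1 * X j, a1.mul (isHomogeneous_X k j), ?_, ?_⟩
    · rw [map_mul, b1, map_mul (aeval (R := k) _), aeval_X, pow_succ]
      field_simp
    · intro x hx
      rw [map_mul, map_mul, c1 x hx]

lemma deslice {f : MvPolynomial (Fin 3) k} {d : ℕ} (hf : f.IsHomogeneous d) {v : Fin 3 → k} (hv : v ≠ 0)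
    {G H s a : MvPolynomial (Fin 3) k} {e e' : ℕ} (hG : G.IsHomogeneous e') (hH : H.IsHomogeneous e)
    (h : s * G - a * H ∈ sI f v) :
    ∃ N t, t.IsHomogeneous N ∧ eval v t = eval v s ∧ t * G ∈ Ideal.span {H, f} := by
  obtain ⟨i, hi, hsl⟩ := slice_form hv
  obtain ⟨b, c, hbc⟩ := Ideal.mem_span_pair.1 h
  have hi' : (v i)⁻¹ ≠ 0 := inv_ne_zero hi
  obtain ⟨N1, h1⟩ := homogenize i (v i)⁻¹ hi' s
  obtain ⟨N2, h2⟩ := homogenize i (v i)⁻¹ hi' a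
  obtain ⟨N3, h3⟩ := homogenize i (v i)⁻¹ hi' b
  obtain ⟨t1, a1, b1, c1⟩ := h1 (N1 + N2 + N3 + e + d) (by omega)
  obtain ⟨t2, a2, b2, c2⟩ := h2 (N1 + N2 + N3 + e' + d) (by omega)
  obtain ⟨t3, a3, b3, c3⟩ := h3 (N1 + N2 + N3 + e' + e) (by omega)
  refine ⟨_, t1, a1, c1 v (by simp [hi]), ?_⟩
  refine Ideal.mem_span_pair.2 ⟨t2, t3, ?_⟩
  set K := FractionRing (MvPolynomial (Fin 3) k)
  set l : K := algebraMap _ K (C (v i)⁻¹ * X i) with hldef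
  have hl : l ≠ 0 := by
    rw [hldef, Ne, FaithfulSMul.algebraMap_eq_zero_iff]
    exact mul_ne_zero (by simpa using hi) (X_ne_zero i)
  set θ : MvPolynomial (Fin 3) k →ₐ[k] K := aeval (R := k) (fun j => l⁻¹ * algebraMap (MvPolynomial (Fin 3) k) K (X j)) with hθ
  have hhom : ∀ {n : ℕ} {φ : MvPolynomial (Fin 3) k}, φ.IsHomogeneous n → algebraMap _ K φ = l ^ n * θ φ := by
    intro n φ hφ
    have h1 : aeval (R := k) (fun j => algebraMap (MvPolynomial (Fin 3) k) K (X j)) φ = algebraMap _ K φ := by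
      have : (aeval (R := k) (fun j => algebraMap (MvPolynomial (Fin 3) k) K (X j))) =
        (IsScalarTower.toAlgHom k (MvPolynomial (Fin 3) k) K) := by
        apply MvPolynomial.algHom_ext
        intro j
        simp
      rw [this]; rfl
    rw [hθ, aeval_mul_hom hφ, h1, ← mul_assoc, ← mul_pow, mul_inv_cancel₀ hl, one_pow, one_mul]
  have hslice : θ (slicePoly v) = 0 := by
    have h1 : θ (C (v i)⁻¹ * X i) = l⁻¹ * l := by
      have hl2 : l = algebraMap _ K (C (v i)⁻¹ : MvPolynomial (Fin 3) k) * algebraMap (MvPolynomial (Fin 3) k) K (X i) := by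
        rw [hldef, map_mul]
      have : algebraMap k K (v i)⁻¹ = algebraMap _ K (C (v i)⁻¹ : MvPolynomial (Fin 3) k) := rfl
      rw [map_mul, hθ, aeval_X, aeval_C, this]
      linear_combination (-l⁻¹) * hl2
    rw [hsl, map_sub, h1, inv_mul_cancel₀ hl, map_one, sub_self]
  have hθ' := congrArg θ hbc
  simp only [map_add, map_mul, map_sub, hslice] at hθ'
  apply FaithfulSMul.algebraMap_injective (MvPolynomial (Fin 3) k) K
  rw [map_add, map_mul, map_mul, map_mul, b1, b2, b3, hhom hG, hhom hH, hhom hf]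
  linear_combination l ^ (N1 + N2 + N3 + e + d + e') * hθ'

/-- smooth irreducible plane curve -/
structure Sm (f : MvPolynomial (Fin 3) k) (d : ℕ) : Prop where
  hom : f.IsHomogeneous d
  prime : Prime f
  two_le : 2 ≤ d
  smooth : ∀ v : Fin 3 → k, eval v f = 0 → v ≠ 0 → ∃ i, eval v (pderiv i f) ≠ 0

/-- exact order predicate -/
def Ex (f t : MvPolynomial (Fin 3) k) (v : Fin 3 → k) (g : MvPolynomial (Fin 3) k) (n : ℕ) : Prop :=
  ∃ u a, eval v u ≠ 0 ∧ eval v a ≠ 0 ∧ u * g - a * t ^ n ∈ sI f v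

/-- uniformizer data -/
def Unif (f : MvPolynomial (Fin 3) k) (v : Fin 3 → k) (t w : MvPolynomial (Fin 3) k) : Prop :=
  eval v t = 0 ∧ eval v w ≠ 0 ∧ ∀ x ∈ mI v, w * x ∈ sI f v ⊔ Ideal.span {t}

lemma Unif.pow {f t w : MvPolynomial (Fin 3) k} {v : Fin 3 → k} (h : Unif f v t w) (n : ℕ) :
    ∀ x ∈ (mI v) ^ n, w ^ n * x ∈ sI f v ⊔ Ideal.span {t ^ n} := by
  induction n with
  | zero => intro x _; simp
  | succ n ih =>
    intro x hx
    rw [pow_succ] at hx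
    induction hx using Submodule.mul_induction_on' with
    | mem_mul_mem a ha b hb =>
      obtain ⟨i1, hi1, j1, hj1, h1⟩ := Submodule.mem_sup.1 (ih a ha)
      obtain ⟨i2, hi2, j2, hj2, h2⟩ := Submodule.mem_sup.1 (h.2.2 b hb)
      obtain ⟨c1, rfl⟩ := Ideal.mem_span_singleton'.1 hj1
      obtain ⟨c2, rfl⟩ := Ideal.mem_span_singleton'.1 hj2
      have : w ^ (n + 1) * (a * b) = (i1 * (i2 + c2 * t) + c1 * t ^ n * i2) + (c1 * c2) * t ^ (n + 1) := by
        linear_combination (-w * b) * h1 - (i1 + c1 * t ^ n) * h2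
      rw [this]
      exact Ideal.add_mem _ (Ideal.mem_sup_left (Ideal.add_mem _ (Ideal.mul_mem_right _ _ hi1)
        (Ideal.mul_mem_left _ _ hi2))) (Ideal.mem_sup_right (Ideal.mul_mem_left _ _ (Ideal.mem_span_singleton_self _)))
    | add x _ y _ hx hy => rw [mul_add]; exact Ideal.add_mem _ hx hy

lemma Ex.of_mem {f t w : MvPolynomial (Fin 3) k} {v : Fin 3 → k} (h : Unif f v t w) {g : MvPolynomial (Fin 3) k}
    {n : ℕ} (h1 : g ∈ sI f v + (mI v) ^ n) (h2 : g ∉ sI f v + (mI v) ^ (n + 1)) : Ex f t v g n := by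
  obtain ⟨i, hi, x, hx, rfl⟩ := Submodule.mem_sup.1 h1
  obtain ⟨j, hj, y, hy, hxy⟩ := Submodule.mem_sup.1 (h.pow n x hx)
  obtain ⟨a, rfl⟩ := Ideal.mem_span_singleton'.1 hy
  have hmem : w ^ n * (i + x) - a * t ^ n ∈ sI f v := by
    have : w ^ n * (i + x) - a * t ^ n = w ^ n * i + j := by linear_combination -hxy
    rw [this]
    exact Ideal.add_mem _ (Ideal.mul_mem_left _ _ hi) hj
  have hw : eval v (w ^ n) ≠ 0 := by rw [map_pow]; exact pow_ne_zero _ h.2.1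
  refine ⟨w ^ n, a, hw, ?_, hmem⟩
  intro ha
  apply h2
  apply mem_of_mul_mem hw
  have : w ^ n * (i + x) = (w ^ n * (i + x) - a * t ^ n) + t ^ n * a := by ring
  rw [this]
  refine Ideal.add_mem _ (Ideal.mem_sup_left hmem) (Ideal.mem_sup_right ?_)
  rw [pow_succ]
  exact Ideal.mul_mem_mul (Ideal.pow_mem_pow h.1 n) ha

lemma Ex.mul {f t : MvPolynomial (Fin 3) k} {v : Fin 3 → k} {g h : MvPolynomial (Fin 3) k}
    {n m : ℕ} (h1 : Ex f t v g n) (h2 : Ex f t v h m) : Ex f t v (g * h) (n + m) := by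
  obtain ⟨u, a, hu, ha, hm⟩ := h1
  obtain ⟨u', a', hu', ha', hm'⟩ := h2
  refine ⟨u * u', a * a', by simp [hu, hu'], by simp [ha, ha'], ?_⟩
  have : u * u' * (g * h) - a * a' * t ^ (n + m) = (u * g - a * t ^ n) * (u' * h) +
    (a * t ^ n) * (u' * h - a' * t ^ m) := by ring
  rw [this]
  exact Ideal.add_mem _ (Ideal.mul_mem_right _ _ hm) (Ideal.mul_mem_left _ _ hm')

/-- a form which is locally zero on the curve is divisible by f -/
lemma Sm.dvd {f : MvPolynomial (Fin 3) k} {d : ℕ} (hS : Sm f d) {v : Fin 3 → k} (hv : v ≠ 0)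
    (hfv : eval v f = 0) {g u : MvPolynomial (Fin 3) k} {e : ℕ} (hg : g.IsHomogeneous e)
    (hu : eval v u ≠ 0) (h : u * g ∈ sI f v) : f ∣ g := by
  obtain ⟨N, t, -, h1, h2⟩ := deslice hS.hom hv hg (isHomogeneous_zero (Fin 3) k 0) (a := 0) (s := u) (by simpa using h)
  obtain ⟨a, b, hab⟩ := Ideal.mem_span_pair.1 h2
  refine (hS.prime.dvd_or_dvd (a := t) ⟨b, by linear_combination -hab⟩).resolve_left ?_
  rintro ⟨c, rfl⟩
  apply hu
  rw [← h1, map_mul, hfv, zero_mul]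

lemma Ex.lt_absurd {f : MvPolynomial (Fin 3) k} {d : ℕ} (hS : Sm f d) {v : Fin 3 → k} (hv : v ≠ 0)
    (hfv : eval v f = 0) {t w g : MvPolynomial (Fin 3) k} (hU : Unif f v t w) {e : ℕ} (hg : g.IsHomogeneous e)
    (hfg : ¬ f ∣ g) {n m : ℕ} (h1 : Ex f t v g n) (h2 : Ex f t v g m) (hnm : n < m) : False := by
  obtain ⟨u, a, hu, ha, hm⟩ := h1
  obtain ⟨u', a', hu', ha', hm'⟩ := h2
  obtain ⟨l, rfl⟩ : ∃ l, m = n + l + 1 := ⟨m - n - 1, by omega⟩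
  apply hfg
  refine hS.dvd hv hfv hg (u := (u' * a - u * a' * t ^ (l + 1)) * u) (by simp [hu', ha, hU.1, hu]) ?_
  have h3 : (u' * a - u * a' * t ^ (l + 1)) * t ^ n ∈ sI f v := by
    have : (u' * a - u * a' * t ^ (l + 1)) * t ^ n =
      u * (u' * g - a' * t ^ (n + l + 1)) - u' * (u * g - a * t ^ n) := by ring
    rw [this]
    exact Ideal.sub_mem _ (Ideal.mul_mem_left _ _ hm') (Ideal.mul_mem_left _ _ hm)
  have : (u' * a - u * a' * t ^ (l + 1)) * u * g = (u' * a - u * a' * t ^ (l + 1)) * (u * g - a * t ^ n)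
    + a * ((u' * a - u * a' * t ^ (l + 1)) * t ^ n) := by ring
  rw [this]
  exact Ideal.add_mem _ (Ideal.mul_mem_left _ _ hm) (Ideal.mul_mem_left _ _ h3)

lemma mem_mono {f : MvPolynomial (Fin 3) k} {v : Fin 3 → k} {g : MvPolynomial (Fin 3) k} {n m : ℕ} (h : n ≤ m)
    (hg : g ∈ sI f v + (mI v) ^ m) : g ∈ sI f v + (mI v) ^ n := by
  have h1 : (mI v) ^ m ≤ (mI v) ^ n := Ideal.pow_le_pow_right h
  have h2 : sI f v ⊔ (mI v) ^ m ≤ sI f v ⊔ (mI v) ^ n := sup_le_sup le_rfl h1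
  exact h2 hg

lemma Sm.bdd {f : MvPolynomial (Fin 3) k} {d : ℕ} (hS : Sm f d) {v : Fin 3 → k} (hv : v ≠ 0)
    (hfv : eval v f = 0) {g : MvPolynomial (Fin 3) k} {e : ℕ} (hg : g.IsHomogeneous e)
    (hfg : ¬ f ∣ g) : BddAbove {n : ℕ | g ∈ sI f v + (mI v) ^ n} := by
  by_contra hcon
  have hall : ∀ n, g ∈ sI f v + (mI v) ^ n := by
    intro n
    rw [not_bddAbove_iff] at hcon
    obtain ⟨m, hm, hnm⟩ := hcon n
    exact mem_mono hnm.le hm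
  set J : Ideal (MvPolynomial (Fin 3) k ⧸ sI f v) := (mI v).map (Ideal.Quotient.mk (sI f v)) with hJ
  have h1 : Ideal.Quotient.mk (sI f v) g ∈ (⨅ i : ℕ, J ^ i • ⊤ : Submodule (MvPolynomial (Fin 3) k ⧸ sI f v) (MvPolynomial (Fin 3) k ⧸ sI f v)) := by
    rw [Submodule.mem_iInf]
    intro n
    rw [smul_eq_mul, Ideal.mul_top, ← Ideal.map_pow]
    obtain ⟨i, hi, x, hx, hix⟩ := Submodule.mem_sup.1 (hall n)
    rw [← hix, map_add, Ideal.Quotient.eq_zero_iff_mem.2 hi, zero_add]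
    exact Ideal.mem_map_of_mem _ hx
  obtain ⟨⟨r, hr⟩, hrg⟩ := (Ideal.mem_iInf_smul_pow_eq_bot_iff J _).1 h1
  obtain ⟨r, rfl⟩ := Ideal.Quotient.mk_surjective r
  rw [Ideal.mem_quotient_iff_mem (sI_le hv hfv)] at hr
  have hr0 : eval v r = 0 := hr
  apply hfg
  refine hS.dvd hv hfv hg (u := r - 1) (by simp [hr0]) ?_
  simp only [smul_eq_mul] at hrg
  rw [← map_mul, Ideal.Quotient.eq] at hrg
  convert hrg using 1
  ring

section

lemma Sm.unif {f : MvPolynomial (Fin 3) k} {d : ℕ} (hS : Sm f d) (q : PlanePoint f) : ∃ t w, Unif f q.1.rep t w :=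
  exists_unif hS.hom q.1.rep_nonzero q.2 (hS.smooth _ q.2 q.1.rep_nonzero)

lemma Sm.mem_iff {f : MvPolynomial (Fin 3) k} {d : ℕ} (hS : Sm f d) (q : PlanePoint f) {g : MvPolynomial (Fin 3) k} {e : ℕ} (hg : g.IsHomogeneous e) (hfg : ¬ f ∣ g) (n : ℕ) :
    g ∈ sI f q.1.rep + (mI q.1.rep) ^ n ↔ n ≤ ordAt f q g := by
  have hb := hS.bdd q.1.rep_nonzero q.2 hg hfg
  rw [ordAt_eq]
  constructor
  · intro h
    exact le_csSup hb h
  · intro h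
    have := Nat.sSup_mem (s := {n : ℕ | g ∈ sI f q.1.rep + (mI q.1.rep) ^ n}) ⟨0, by simp⟩ hb
    exact mem_mono h this

lemma Sm.ex {f : MvPolynomial (Fin 3) k} {d : ℕ} (hS : Sm f d) (q : PlanePoint f) {g t w : MvPolynomial (Fin 3) k} {e : ℕ} (hg : g.IsHomogeneous e) (hfg : ¬ f ∣ g)
    (hU : Unif f q.1.rep t w) : Ex f t q.1.rep g (ordAt f q g) :=
  Ex.of_mem hU ((hS.mem_iff q hg hfg _).2 le_rfl) (by rw [hS.mem_iff q hg hfg]; omega)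

lemma Sm.ord_mul {f : MvPolynomial (Fin 3) k} {d : ℕ} (hS : Sm f d) (q : PlanePoint f) {g h : MvPolynomial (Fin 3) k} {e e' : ℕ} (hg : g.IsHomogeneous e) (hfg : ¬ f ∣ g)
    (hh : h.IsHomogeneous e') (hfh : ¬ f ∣ h) : ordAt f q (g * h) = ordAt f q g + ordAt f q h := by
  obtain ⟨t, w, hU⟩ := hS.unif q
  have hfgh : ¬ f ∣ g * h := fun h => (hS.prime.dvd_or_dvd h).elim hfg hfh
  have h1 := hS.ex q (hg.mul hh) hfgh hU
  have h2 := (hS.ex q hg hfg hU).mul (hS.ex q hh hfh hU)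
  rcases lt_trichotomy (ordAt f q (g * h)) (ordAt f q g + ordAt f q h) with hl | hl | hl
  · exact (h1.lt_absurd hS q.1.rep_nonzero q.2 hU (hg.mul hh) hfgh h2 hl).elim
  · exact hl
  · exact (h2.lt_absurd hS q.1.rep_nonzero q.2 hU (hg.mul hh) hfgh h1 hl).elim

/-- local membership -/
lemma Sm.local_mem {f : MvPolynomial (Fin 3) k} {d : ℕ} (hS : Sm f d) (q : PlanePoint f) {G H : MvPolynomial (Fin 3) k} {e e' : ℕ} (hG : G.IsHomogeneous e) (hfG : ¬ f ∣ G)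
    (hH : H.IsHomogeneous e') (hfH : ¬ f ∣ H) (hle : ordAt f q H ≤ ordAt f q G) :
    ∃ N s, s.IsHomogeneous N ∧ eval q.1.rep s ≠ 0 ∧ s * G ∈ Ideal.span {H, f} := by
  obtain ⟨t, w, hU⟩ := hS.unif q
  obtain ⟨u, a, hu, ha, hm⟩ := hS.ex q hG hfG hU
  obtain ⟨u', a', hu', ha', hm'⟩ := hS.ex q hH hfH hU
  obtain ⟨l, hl⟩ := Nat.exists_eq_add_of_le hle
  rw [hl] at hm
  have : (a' * u) * G - (u' * a * t ^ l) * H ∈ sI f q.1.rep := by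
    have : (a' * u) * G - (u' * a * t ^ l) * H = a' * (u * G - a * t ^ (ordAt f q H + l)) -
      (a * t ^ l) * (u' * H - a' * t ^ (ordAt f q H)) := by ring
    rw [this]
    exact Ideal.sub_mem _ (Ideal.mul_mem_left _ _ hm) (Ideal.mul_mem_left _ _ hm')
  obtain ⟨N, s, h1, h2, h3⟩ := deslice hS.hom q.1.rep_nonzero hG hH this
  exact ⟨N, s, h1, by rw [h2]; simp [ha', hu], h3⟩

/-- Max Noether's theorem -/
lemma Sm.noether {f : MvPolynomial (Fin 3) k} {d : ℕ} (hS : Sm f d) [IsAlgClosed k] {G H : MvPolynomial (Fin 3) k} {e e' : ℕ} (hG : G.IsHomogeneous e) (hfG : ¬ f ∣ G)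
    (hH : H.IsHomogeneous e') (hfH : ¬ f ∣ H) (hle : ∀ q, ordAt f q H ≤ ordAt f q G) :
    G ∈ Ideal.span {H, f} := by
  have hinf : Infinite k := IsAlgClosed.instInfinite
  obtain ⟨Z0, Z1, hZ0, hZ1, hZ⟩ := exists_Z f hS.prime d hS.hom hS.two_le
  set J : Ideal (MvPolynomial (Fin 3) k) := (Ideal.span {H, f}).colon {G} with hJ
  have hJm : ∀ s, s ∈ J ↔ s * G ∈ Ideal.span {H, f} := by
    intro s
    rw [hJ, Submodule.mem_colon_singleton, smul_eq_mul]
  have hzero : ∀ x : Fin 3 → k, x ∈ zeroLocus k J → x = 0 := by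
    intro x hx
    rw [mem_zeroLocus_iff] at hx
    by_contra hx0
    have hfx : eval x f = 0 := by
      have := hx f ((hJm f).2 (Ideal.mul_mem_right _ _ (Ideal.subset_span (by simp))))
      simpa [aeval_eq_eval] using this
    obtain ⟨c, hc⟩ := Projectivization.exists_smul_eq_mk_rep k x hx0
    have hqf : eval (Projectivization.mk k x hx0).rep f = 0 := by
      rw [← hc, Units.smul_def, eval_smul_hom hS.hom, hfx, mul_zero]
    obtain ⟨N, s, h1, h2, h3⟩ := hS.local_mem ⟨Projectivization.mk k x hx0, hqf⟩ hG hfG hH hfH (hle _)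
    apply h2
    have h4 := hx s ((hJm s).2 h3)
    rw [aeval_eq_eval] at h4
    change eval x s = 0 at h4
    rw [← hc, Units.smul_def, eval_smul_hom h1, h4, mul_zero]
  have hrad : ∀ Z : MvPolynomial (Fin 3) k, eval 0 Z = 0 → ∃ n, Z ^ n * G ∈ Ideal.span {H, f} := by
    intro Z hZ
    have : Z ∈ J.radical := by
      rw [← vanishingIdeal_zeroLocus_eq_radical (k := k) (K := k), mem_vanishingIdeal_iff]
      intro x hx
      rw [hzero x hx, aeval_eq_eval]
      exact hZ
    obtain ⟨n, hn⟩ := this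
    exact ⟨n, (hJm _).1 hn⟩
  obtain ⟨n0, h0⟩ := hrad Z0 hZ0
  obtain ⟨n1, h1⟩ := hrad Z1 hZ1
  have hdesc : ∀ n, (∀ i j, n ≤ i + j → Z0 ^ i * Z1 ^ j * G ∈ Ideal.span {H, f}) → G ∈ Ideal.span {H, f} := by
    intro n
    induction n with
    | zero => intro h; simpa using h 0 0 (by omega)
    | succ n ih =>
      intro h
      apply ih
      intro i j hij
      apply hZ _ _ hfH
      · have := h (i + 1) j (by omega)
        convert this using 1; ring
      · have := h i (j + 1) (by omega)
        convert this using 1; ring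
  apply hdesc (n0 + n1)
  intro i j hij
  by_cases hi : n0 ≤ i
  · obtain ⟨l, rfl⟩ := Nat.exists_eq_add_of_le hi
    have := Ideal.mul_mem_left _ (Z0 ^ l * Z1 ^ j) h0
    convert this using 1; ring
  · obtain ⟨l, rfl⟩ := Nat.exists_eq_add_of_le (show n1 ≤ j by omega)
    have := Ideal.mul_mem_left _ (Z1 ^ l * Z0 ^ i) h1
    convert this using 1; ring

end
end
end PC

namespace PC
section
variable {k : Type*} [Field k]

/-- restriction of a polynomial to the parametrized line `a + X b` -/
noncomputable def restr (a b : Fin 3 → k) : MvPolynomial (Fin 3) k →ₐ[k] Polynomial k :=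
  aeval (fun i => Polynomial.C (a i) + Polynomial.C (b i) * Polynomial.X)

/-- expansion at τ -/
noncomputable def expd (τ : k) : Polynomial k →ₐ[k] PowerSeries k :=
  Polynomial.aeval (PowerSeries.C τ + PowerSeries.X)

lemma expd_C (τ r : k) : expd τ (Polynomial.C r) = PowerSeries.C r := by
  rw [expd, Polynomial.aeval_C]; rfl

lemma expd_X (τ : k) : expd τ Polynomial.X = PowerSeries.C τ + PowerSeries.X := by
  rw [expd, Polynomial.aeval_X]

lemma expd_sub (τ : k) : expd τ (Polynomial.X - Polynomial.C τ) = PowerSeries.X := by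
  rw [map_sub, expd_X, expd_C]; ring

lemma expd_coeff (τ : k) (p : Polynomial k) : PowerSeries.constantCoeff (expd τ p) = p.eval τ := by
  induction p using Polynomial.induction_on' with
  | add p q hp hq => simp [hp, hq]
  | monomial n r =>
    rw [← Polynomial.C_mul_X_pow_eq_monomial, map_mul, map_pow, expd_C, expd_X]
    simp

lemma isUnit_of_coeff {φ : PowerSeries k} (h : PowerSeries.constantCoeff φ ≠ 0) : IsUnit φ := by
  rw [PowerSeries.isUnit_iff_constantCoeff]
  exact isUnit_iff_ne_zero.2 h

lemma le_of_X_pow_dvd {n m : ℕ} {r : PowerSeries k} (hr : IsUnit r)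
    (h : (PowerSeries.X : PowerSeries k) ^ n ∣ PowerSeries.X ^ m * r) : n ≤ m := by
  rw [hr.dvd_mul_right] at h
  exact (pow_dvd_pow_iff PowerSeries.X_ne_zero PowerSeries.X_prime.not_isUnit).1 h

lemma expd_dvd (τ : k) (p : Polynomial k) (n : ℕ) :
    (Polynomial.X - Polynomial.C τ) ^ n ∣ p ↔ (PowerSeries.X : PowerSeries k) ^ n ∣ expd τ p := by
  constructor
  · intro h
    have := map_dvd (expd τ) h
    rwa [map_pow, expd_sub] at this
  · intro h
    by_cases hp : p = 0
    · simp [hp]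
    obtain ⟨q, hq, hq2⟩ := Polynomial.exists_eq_pow_rootMultiplicity_mul_and_not_dvd p hp τ
    rw [hq, map_mul, map_pow, expd_sub] at h
    rw [Polynomial.dvd_iff_isRoot, Polynomial.IsRoot, ← expd_coeff] at hq2
    have := le_of_X_pow_dvd (isUnit_of_coeff hq2) h
    exact (pow_dvd_pow _ this).trans (Polynomial.pow_rootMultiplicity_dvd p τ)

lemma exists_sigma {f : MvPolynomial (Fin 3) k} (q : PlanePoint f) {a b : Fin 3 → k} {τ c : k} (hc : c ≠ 0)
    (hq : q.1.rep = c • (a + τ • b)) (hb : ∀ r : k, b ≠ r • q.1.rep) :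
    ∃ σ : MvPolynomial (Fin 3) k →ₐ[k] PowerSeries k, σ (slicePoly q.1.rep) = 0 ∧
      (∀ n, ∃ U, IsUnit U ∧ ∀ φ : MvPolynomial (Fin 3) k, φ.IsHomogeneous n → σ φ = U * expd τ (restr a b φ)) ∧
      (∀ p, PowerSeries.constantCoeff (σ p) = eval q.1.rep p) ∧
      ∃ j, ¬ PowerSeries.X ^ 2 ∣ σ (X j - C (q.1.rep j)) := by
  set v := q.1.rep with hv
  obtain ⟨i, hi, hsl⟩ := slice_form q.1.rep_nonzero
  rw [← hv] at hi hsl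
  have hvj : ∀ j, v j = c * (a j + τ * b j) := fun j => by rw [hq]; simp
  set lj : Fin 3 → PowerSeries k := fun j => PowerSeries.C (a j) + PowerSeries.C (b j) * (PowerSeries.C τ + PowerSeries.X) with hlj
  set L : PowerSeries k := PowerSeries.C (v i)⁻¹ * lj i with hL
  have hL0 : PowerSeries.constantCoeff L = c⁻¹ := by
    rw [hL, hlj]
    simp only [map_mul, map_add, PowerSeries.constantCoeff_C, PowerSeries.constantCoeff_X, add_zero]
    have : a i + b i * τ = c⁻¹ * v i := by rw [hvj, ← mul_assoc, inv_mul_cancel₀ hc]; ring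
    rw [this]
    field_simp
  have hL0' : PowerSeries.constantCoeff L ≠ 0 := by rw [hL0]; exact inv_ne_zero hc
  have hLL : L * L⁻¹ = 1 := PowerSeries.mul_inv_cancel _ hL0'
  have hLi : PowerSeries.constantCoeff L⁻¹ = c := by
    rw [PowerSeries.constantCoeff_inv, hL0, inv_inv]
  have hCC : ∀ r : k, algebraMap k (PowerSeries k) r = PowerSeries.C r := fun r => rfl
  refine ⟨aeval (fun j => L⁻¹ * lj j), ?_, ?_, ?_, ?_⟩
  · rw [hsl, map_sub, map_mul, aeval_X, aeval_C, map_one, hCC]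
    linear_combination hLL - L⁻¹ * hL
  · intro n
    refine ⟨(L⁻¹) ^ n, IsUnit.pow _ (isUnit_of_coeff (by rw [hLi]; exact hc)), ?_⟩
    intro φ hφ
    rw [aeval_mul_hom hφ]
    congr 1
    have : aeval lj = (expd τ).comp (restr a b) := by
      apply MvPolynomial.algHom_ext
      intro j
      rw [aeval_X, AlgHom.comp_apply, restr, aeval_X, map_add, map_mul, expd_C, expd_C, expd_X]
    rw [this]; rfl
  · intro p
    induction p using MvPolynomial.induction_on with
    | C r => rw [aeval_C, hCC]; simp
    | add p q hp hq => rw [map_add, map_add, map_add, hp, hq]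
    | mul_X p j hp =>
      rw [map_mul, map_mul, map_mul, hp, aeval_X, eval_X, map_mul, hLi, hvj]
      simp [hlj]
      left; left; ring
  · by_contra! hcon
    apply hb (PowerSeries.coeff 1 L)
    funext j
    have h1 := hcon j
    rw [map_sub, aeval_X, aeval_C, hCC] at h1
    have h2 := Dvd.dvd.mul_left h1 L
    have h3 : L * (L⁻¹ * lj j - PowerSeries.C (v j)) = lj j - L * PowerSeries.C (v j) := by
      linear_combination lj j * hLL
    rw [h3, PowerSeries.X_pow_dvd_iff] at h2
    have h4 := h2 1 (by norm_num)
    simp only [map_sub, hlj, map_add, mul_add, PowerSeries.coeff_C_mul, PowerSeries.coeff_mul_C, PowerSeries.coeff_one_X] at h4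
    simp at h4
    simp only [Pi.smul_apply, smul_eq_mul]
    linear_combination h4

section

lemma Sm.line_ord {f : MvPolynomial (Fin 3) k} {d : ℕ} (hS : Sm f d) (q : PlanePoint f)
  {a b : Fin 3 → k} {τ c : k} (hc : c ≠ 0) (hq : q.1.rep = c • (a + τ • b)) (hb : ∀ r : k, b ≠ r • q.1.rep)
    {l : MvPolynomial (Fin 3) k} (hl : l.IsHomogeneous 1) (hfl : ¬ f ∣ l) (hrl : restr a b l = 0)
    {μ : ℕ} (hμ : (Polynomial.X - Polynomial.C τ) ^ μ ∣ restr a b f) : μ ≤ ordAt f q l := by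
  obtain ⟨σ, s1, s2, s3, j, s4⟩ := exists_sigma q hc hq hb
  rw [expd_dvd] at hμ
  have hσf : PowerSeries.X ^ μ ∣ σ f := by
    obtain ⟨U, -, hU⟩ := s2 d
    rw [hU f hS.hom]
    exact Dvd.dvd.mul_left hμ _
  have hσI : ∀ x ∈ sI f q.1.rep, PowerSeries.X ^ μ ∣ σ x := by
    intro x hx
    obtain ⟨y, z, rfl⟩ := Ideal.mem_span_pair.1 hx
    rw [map_add, map_mul, map_mul, s1, mul_zero, add_zero]
    exact Dvd.dvd.mul_left hσf _
  have hσl : σ l = 0 := by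
    obtain ⟨U, -, hU⟩ := s2 1
    rw [hU l hl, hrl, map_zero, mul_zero]
  obtain ⟨t, w, hU⟩ := hS.unif q
  obtain ⟨y, z, hy, hz, hm⟩ := hS.ex q hl hfl hU
  set n := ordAt f q l
  by_contra! hlt
  have h1 := hσI _ hm
  rw [map_sub, map_mul, map_mul, hσl, mul_zero, zero_sub, dvd_neg, map_pow,
    (isUnit_of_coeff (by rw [s3]; exact hz) : IsUnit (σ z)).dvd_mul_left] at h1
  have ht : PowerSeries.X ∣ σ t := by
    rw [PowerSeries.X_dvd_iff, s3]; exact hU.1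
  obtain ⟨r, hr⟩ := ht
  have hn : n ≠ 0 := by
    intro hn
    rw [hn, pow_zero] at h1
    have := le_of_X_pow_dvd (m := 0) (r := (1 : PowerSeries k)) isUnit_one (by simpa using h1)
    omega
  have hru : IsUnit r := by
    apply isUnit_of_coeff
    intro hr0
    rw [← PowerSeries.X_dvd_iff] at hr0
    apply s4
    have h2 := hU.2.2 _ (X_sub_mem q.1.rep j)
    obtain ⟨i1, hi1, j1, hj1, h3⟩ := Submodule.mem_sup.1 h2
    obtain ⟨c1, rfl⟩ := Ideal.mem_span_singleton'.1 hj1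
    have h4 := congrArg σ h3
    rw [map_mul σ w] at h4
    rw [← (isUnit_of_coeff (by rw [s3]; exact hU.2.1) : IsUnit (σ w)).dvd_mul_left, ← h4, map_add, map_mul, hr]
    refine dvd_add ((pow_dvd_pow _ (by omega)).trans (hσI _ hi1)) (Dvd.dvd.mul_left ?_ _)
    rw [pow_two]
    exact mul_dvd_mul_left _ hr0
  rw [hr, mul_pow] at h1
  have := le_of_X_pow_dvd (hru.pow n) h1
  omega

lemma Sm.line_dvd {f : MvPolynomial (Fin 3) k} {d : ℕ} (hS : Sm f d) (q : PlanePoint f)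
  {a b : Fin 3 → k} {τ c : k} (hc : c ≠ 0) (hq : q.1.rep = c • (a + τ • b)) (hb : ∀ r : k, b ≠ r • q.1.rep)
    {B : MvPolynomial (Fin 3) k} {e : ℕ} (hB : B.IsHomogeneous e) (hfB : ¬ f ∣ B)
    {n : ℕ} (hμ : (Polynomial.X - Polynomial.C τ) ^ n ∣ restr a b f) (hn : n ≤ ordAt f q B) :
    (Polynomial.X - Polynomial.C τ) ^ n ∣ restr a b B := by
  obtain ⟨σ, s1, s2, s3, -⟩ := exists_sigma q hc hq hb
  rw [expd_dvd] at hμ ⊢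
  have hσf : PowerSeries.X ^ n ∣ σ f := by
    obtain ⟨U, -, hU⟩ := s2 d
    rw [hU f hS.hom]
    exact Dvd.dvd.mul_left hμ _
  rw [← hS.mem_iff q hB hfB] at hn
  obtain ⟨x, hx, y, hy, rfl⟩ := Submodule.mem_sup.1 hn
  obtain ⟨U, hUu, hU⟩ := s2 e
  rw [← hUu.dvd_mul_left, ← hU _ hB, map_add]
  refine dvd_add ?_ ?_
  · obtain ⟨y, z, rfl⟩ := Ideal.mem_span_pair.1 hx
    rw [map_add, map_mul, map_mul, s1, mul_zero, add_zero]
    exact Dvd.dvd.mul_left hσf _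
  · have h1 : mI q.1.rep ≤ (Ideal.span {PowerSeries.X}).comap σ := by
      intro p hp
      rw [Ideal.mem_comap, Ideal.mem_span_singleton, PowerSeries.X_dvd_iff, s3]
      exact hp
    have h2 := (Ideal.pow_right_mono h1 n).trans (Ideal.le_comap_pow _ n)
    have h3 := h2 hy
    rwa [Ideal.mem_comap, Ideal.span_singleton_pow, Ideal.mem_span_singleton] at h3

end
end
end PC

namespace PC
section
variable {k : Type*} [Field k]

lemma restr_eval (a b : Fin 3 → k) (τ : k) (φ : MvPolynomial (Fin 3) k) :
    (restr a b φ).eval τ = eval (a + τ • b) φ := by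
  induction φ using MvPolynomial.induction_on with
  | C r => rw [restr, aeval_C]; simp
  | add p q hp hq => rw [map_add, map_add, Polynomial.eval_add, hp, hq]
  | mul_X p j hp =>
    rw [map_mul, map_mul, Polynomial.eval_mul, hp, eval_X, restr, aeval_X]
    simp only [Polynomial.eval_add, Polynomial.eval_mul, Polynomial.eval_C, Polynomial.eval_X, Pi.add_apply, Pi.smul_apply, smul_eq_mul, mul_comm τ]

lemma restr_deg (a b : Fin 3 → k) {n : ℕ} {φ : MvPolynomial (Fin 3) k} (hφ : φ.IsHomogeneous n) :
    (restr a b φ).natDegree ≤ n ∧ (restr a b φ).coeff n = eval b φ := by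
  have hs : ∀ s ∈ φ.support, ∑ i, s i = n := by
    intro s hs
    have h := hφ (mem_support_iff.1 hs)
    rw [← h, Finsupp.weight_apply, Finsupp.sum_fintype] <;> simp
  have h1 : ∀ i, (Polynomial.C (a i) + Polynomial.C (b i) * Polynomial.X).natDegree ≤ 1 := by
    intro i
    rw [add_comm]
    exact Polynomial.natDegree_linear_le
  have h2 : ∀ i (m : ℕ), ((Polynomial.C (a i) + Polynomial.C (b i) * Polynomial.X) ^ m).natDegree ≤ m := by
    intro i m
    simpa using Polynomial.natDegree_pow_le_of_le m (h1 i)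
  have h3 : ∀ i (m : ℕ), ((Polynomial.C (a i) + Polynomial.C (b i) * Polynomial.X) ^ m).coeff m = b i ^ m := by
    intro i m
    have := Polynomial.coeff_pow_of_natDegree_le (h1 i) (m := m)
    simpa using this
  have h4 : ∀ s ∈ φ.support, (∏ i, (Polynomial.C (a i) + Polynomial.C (b i) * Polynomial.X) ^ (s i)).natDegree ≤ n ∧
      (∏ i, (Polynomial.C (a i) + Polynomial.C (b i) * Polynomial.X) ^ (s i)).coeff n = ∏ i, b i ^ s i := by
    intro s hss
    have := hs s hss
    rw [Fin.sum_univ_three] at this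
    rw [Fin.prod_univ_three, Fin.prod_univ_three, ← this]
    have h5 := Polynomial.natDegree_mul_le_of_le (h2 0 (s 0)) (h2 1 (s 1))
    refine ⟨Polynomial.natDegree_mul_le_of_le h5 (h2 2 (s 2)), ?_⟩
    rw [Polynomial.coeff_mul_add_eq_of_natDegree_le h5 (h2 2 (s 2)),
      Polynomial.coeff_mul_add_eq_of_natDegree_le (h2 0 (s 0)) (h2 1 (s 1)), h3, h3, h3]
  have h5 : restr a b φ = ∑ s ∈ φ.support, Polynomial.C (coeff s φ) *
      ∏ i, (Polynomial.C (a i) + Polynomial.C (b i) * Polynomial.X) ^ (s i) := by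
    rw [restr, aeval_def, eval₂_eq']; rfl
  rw [h5]
  constructor
  · apply Polynomial.natDegree_sum_le_of_forall_le
    intro s hss
    exact (Polynomial.natDegree_C_mul_le _ _).trans (h4 s hss).1
  · rw [Polynomial.finsetSum_coeff, eval_eq']
    refine Finset.sum_congr rfl fun s hss => ?_
    rw [Polynomial.coeff_C_mul, (h4 s hss).2]

lemma Sm.not_dvd_lin {f : MvPolynomial (Fin 3) k} {d : ℕ} (hS : Sm f d) {c : Fin 3 → k} (hc : c ≠ 0) :
    ¬ f ∣ lin c := by
  rintro ⟨q, hq⟩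
  have h0 := lin_ne hc
  have h1 := totalDegree_mul_of_isDomain hS.prime.ne_zero (f := f) (g := q) (by rintro rfl; exact h0 (by simpa using hq))
  rw [← hq, (lin_hom _).totalDegree h0, hS.hom.totalDegree hS.prime.ne_zero] at h1
  have := hS.two_le
  omega

lemma lin_span {c a b x : Fin 3 → k} (hc : c ≠ 0) (hab : LinearIndependent k ![a, b])
    (ha : eval a (lin c) = 0) (hb : eval b (lin c) = 0) (hx : eval x (lin c) = 0) :
    ∃ s t : k, x = s • a + t • b := by
  by_contra! hcon
  have hx' : x ∉ Submodule.span k (Set.range ![a, b]) := by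
    rw [Matrix.range_cons, Matrix.range_cons, Matrix.range_empty, Set.union_empty, Set.singleton_union,
      Submodule.mem_span_pair]
    rintro ⟨s, t, h⟩
    exact hcon s t h.symm
  have h1 := linearIndependent_finSnoc.2 ⟨hab, hx'⟩
  have h2 := h1.span_eq_top_of_card_eq_finrank (by simp)
  let L : (Fin 3 → k) →ₗ[k] k := ∑ i, c i • LinearMap.proj i
  have hL : ∀ y, L y = eval y (lin c) := by
    intro y; rw [eval_lin]; simp [L]
  have h3 : (⊤ : Submodule k (Fin 3 → k)) ≤ LinearMap.ker L := by
    rw [← h2, Submodule.span_le]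
    rintro _ ⟨i, rfl⟩
    rw [SetLike.mem_coe, LinearMap.mem_ker, hL]
    fin_cases i
    · exact ha
    · exact hb
    · exact hx
  obtain ⟨i, hi⟩ := exists_ne hc
  apply hi
  have := h3 (Submodule.mem_top (x := Pi.single i 1))
  rw [LinearMap.mem_ker, hL, eval_lin] at this
  simpa [Pi.single_apply] using this

open Classical in
lemma Sm.line_B [IsAlgClosed k] {f : MvPolynomial (Fin 3) k} {d : ℕ} (hS : Sm f d) (P0 : PlanePoint f) {cc : Fin 3 → k}
    (hcc : cc ≠ 0) (hP : eval P0.1.rep (lin cc) = 0) {B : MvPolynomial (Fin 3) k} {e : ℕ}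
    (hB : B.IsHomogeneous e) (he : e + 2 ≤ d) (hfB : ¬ f ∣ B)
    (hord : ∀ q, ordAt f q (lin cc) ≤ ordAt f q B + (if P0 = q then 1 else 0)) : lin cc ∣ B := by
  have : Infinite k := IsAlgClosed.instInfinite
  obtain ⟨b, hb0, hbf⟩ : ∃ b, eval b (lin cc) = 0 ∧ eval b f ≠ 0 := by
    by_contra! hcon
    have h1 := lin_dvd_of_vanish hcc f hcon
    have h2 := (lin_prime hcc).irreducible.associated_of_dvd hS.prime.irreducible h1
    exact hS.not_dvd_lin hcc h2.symm.dvd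
  set a := P0.1.rep with ha
  have hbq : ∀ (q : PlanePoint f) (r : k), b ≠ r • q.1.rep := by
    rintro q r rfl
    rw [eval_smul_hom hS.hom, q.2, mul_zero] at hbf
    exact hbf rfl
  have ha0 : a ≠ 0 := P0.1.rep_nonzero
  have hab : LinearIndependent k ![a, b] := by
    rw [LinearIndependent.pair_iff' ha0]
    intro r hr
    exact hbq P0 r hr.symm
  obtain ⟨hd1, hd2⟩ := restr_deg a b hS.hom
  obtain ⟨he1, he2⟩ := restr_deg a b hB
  have hf1 : restr a b f ≠ 0 := by
    intro h; rw [h] at hd2; exact hbf (by simpa using hd2.symm)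
  have hf1d : (restr a b f).natDegree = d :=
    le_antisymm hd1 (Polynomial.le_natDegree_of_ne_zero (by rw [hd2]; exact hbf))
  have hl0 : restr a b (lin cc) = 0 := by
    rw [eval_lin] at hP hb0
    rw [restr, lin, map_sum]
    simp only [map_mul, aeval_X, aeval_C, mul_add, Finset.sum_add_distrib, ← mul_assoc, ← Finset.sum_mul]
    have e1 : ∀ v : Fin 3 → k, ∑ i, (algebraMap k (Polynomial k)) (cc i) * Polynomial.C (v i) = Polynomial.C (∑ i, cc i * v i) := by
      intro v; rw [map_sum]; simp
    rw [e1, e1, hP, hb0]; simp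
  have hB1 : restr a b B = 0 := by
    by_contra hB1
    have hle : (restr a b f).roots ≤ (restr a b B * Polynomial.X).roots := by
      rw [Multiset.le_iff_count]
      intro τ
      rw [Polynomial.count_roots, Polynomial.count_roots]
      set μ := (restr a b f).rootMultiplicity τ with hμ
      by_cases hμ0 : μ = 0
      · rw [hμ0]; exact Nat.zero_le _
      have hroot : eval (a + τ • b) f = 0 := by
        rw [← restr_eval]
        exact (Polynomial.rootMultiplicity_pos hf1).1 (Nat.pos_of_ne_zero hμ0)
      have hx0 : a + τ • b ≠ 0 := by
        intro h
        have := LinearIndependent.pair_iff.1 hab 1 τ (by simpa using h)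
        exact one_ne_zero this.1
      obtain ⟨u, hu⟩ := Projectivization.exists_smul_eq_mk_rep k (a + τ • b) hx0
      let q : PlanePoint f := ⟨Projectivization.mk k (a + τ • b) hx0, by
        rw [← hu, Units.smul_def, eval_smul_hom hS.hom, hroot, mul_zero]⟩
      have hq : q.1.rep = (u : k) • (a + τ • b) := hu.symm
      have hdv : (Polynomial.X - Polynomial.C τ) ^ μ ∣ restr a b f := Polynomial.pow_rootMultiplicity_dvd _ _
      have h1 := hS.line_ord q u.ne_zero hq (hbq q) (lin_hom cc) (hS.not_dvd_lin hcc) hl0 hdv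
      have h2 := h1.trans (hord q)
      rw [Polynomial.le_rootMultiplicity_iff (mul_ne_zero hB1 Polynomial.X_ne_zero)]
      by_cases hPq : P0 = q
      · rw [if_pos hPq] at h2
        have hτ : τ = 0 := by
          have h3 : a = (u : k) • (a + τ • b) := by rw [← hq, ← hPq]
          have h4 := LinearIndependent.pair_iff.1 hab (u - 1) (u * τ) (by
            rw [sub_smul, one_smul, mul_smul]
            nth_rw 2 [h3]
            rw [smul_add]; abel)
          simpa using h4.2
        have h5 := hS.line_dvd q u.ne_zero hq (hbq q) hB hfB (n := μ - 1)
          ((pow_dvd_pow _ (by omega)).trans hdv) (by omega)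
        have h6 : μ = (μ - 1) + 1 := by omega
        rw [h6, pow_succ]
        refine mul_dvd_mul h5 ?_
        rw [hτ]; simp
      · rw [if_neg hPq, add_zero] at h2
        exact Dvd.dvd.mul_right (hS.line_dvd q u.ne_zero hq (hbq q) hB hfB hdv h2) _
    have h1 := Multiset.card_le_card hle
    rw [IsAlgClosed.card_roots_eq_natDegree, hf1d, IsAlgClosed.card_roots_eq_natDegree,
      Polynomial.natDegree_mul hB1 Polynomial.X_ne_zero, Polynomial.natDegree_X] at h1
    omega
  refine lin_dvd_of_vanish hcc B fun x hx => ?_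
  obtain ⟨s, t, rfl⟩ := lin_span hcc hab hP hb0 hx
  by_cases hs : s = 0
  · rw [hB1] at he2
    rw [hs, zero_smul, zero_add, eval_smul_hom hB, ← he2]; simp
  · have : s • a + t • b = s • (a + (s⁻¹ * t) • b) := by
      rw [smul_add, smul_smul, mul_inv_cancel_left₀ hs]
    rw [this, eval_smul_hom hB, ← restr_eval, hB1]; simp

end
end PC

namespace PC
section
variable {k : Type*} [Field k]

open Matrix in
lemma exists_cc [Infinite k] {ι : Type*} [Fintype ι] (v : Fin 3 → k) (hv : v ≠ 0) (w : ι → Fin 3 → k) :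
    ∃ c : Fin 3 → k, c ≠ 0 ∧ eval v (lin c) = 0 ∧ ∀ j, LinearIndependent k ![w j, v] → eval (w j) (lin c) ≠ 0 := by
  classical
  obtain ⟨w0, hw0⟩ : ∃ w0 : Fin 3 → k, LinearIndependent k ![w0, v] := by
    obtain ⟨i, hi⟩ := exists_ne hv
    obtain ⟨j, hj⟩ : ∃ j : Fin 3, j ≠ i := _root_.exists_ne i
    refine ⟨Pi.single j 1, ?_⟩
    rw [LinearIndependent.pair_iff]
    intro s t hst
    have h1 := congrFun hst i
    have h2 := congrFun hst j
    simp [Pi.single_apply, hj.symm, hi] at h1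
    simp [h1] at h2
    exact ⟨h2, h1⟩
  have key : (lin (w0 ⨯₃ v) * ∏ j, if LinearIndependent k ![w j, v] then lin (w j ⨯₃ v) else 1) ≠ 0 := by
    refine mul_ne_zero (lin_ne (crossProduct_ne_zero_iff_linearIndependent.2 hw0)) ?_
    rw [Finset.prod_ne_zero_iff]
    intro j _
    split_ifs with h
    · exact lin_ne (crossProduct_ne_zero_iff_linearIndependent.2 h)
    · exact one_ne_zero
  obtain ⟨y, hy⟩ : ∃ y, eval y (lin (w0 ⨯₃ v) * ∏ j, if LinearIndependent k ![w j, v] then lin (w j ⨯₃ v) else 1) ≠ 0 := by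
    by_contra! hcon
    exact key (MvPolynomial.funext fun x => by rw [hcon x, map_zero])
  rw [map_mul, map_prod] at hy
  have hy1 := left_ne_zero_of_mul hy
  have hy2 := right_ne_zero_of_mul hy
  rw [Finset.prod_ne_zero_iff] at hy2
  have hperm : ∀ w : Fin 3 → k, eval w (lin (v ⨯₃ y)) = eval y (lin (w ⨯₃ v)) := by
    intro w
    rw [eval_lin, eval_lin, cross_apply, cross_apply]
    simp [Fin.sum_univ_three]; ring
  refine ⟨v ⨯₃ y, ?_, ?_, ?_⟩
  · intro h
    rw [← hperm, h, eval_lin] at hy1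
    simp at hy1
  · rw [hperm, cross_self, eval_lin]; simp
  · intro j hj
    have := hy2 j (Finset.mem_univ _)
    rw [if_pos hj] at this
    rwa [hperm]

lemma pp_indep {f : MvPolynomial (Fin 3) k} {p q : PlanePoint f} (h : p ≠ q) :
    LinearIndependent k ![p.1.rep, q.1.rep] := by
  rw [LinearIndependent.pair_iff' p.1.rep_nonzero]
  intro r hr
  apply h
  apply Subtype.ext
  rw [← p.1.mk_rep, ← q.1.mk_rep]
  symm
  rw [Projectivization.mk_eq_mk_iff']
  exact ⟨r, hr⟩

lemma hc_mul {h : MvPolynomial (Fin 3) k} {e : ℕ} (hh : h.IsHomogeneous e) (N : ℕ) (y : MvPolynomial (Fin 3) k) :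
    ∃ y' : MvPolynomial (Fin 3) k, y'.IsHomogeneous (N - e) ∧ homogeneousComponent N (y * h) = y' * h := by
  refine ⟨∑ i ∈ Finset.range (y.totalDegree + 1), if N = i + e then homogeneousComponent i y else 0, ?_, ?_⟩
  · refine IsHomogeneous.sum _ _ _ fun i _ => ?_
    split_ifs with hi
    · have : N - e = i := by omega
      rw [this]
      exact homogeneousComponent_isHomogeneous i y
    · exact isHomogeneous_zero _ _ _
  · conv_lhs => rw [← sum_homogeneousComponent y]
    rw [Finset.sum_mul, map_sum, Finset.sum_mul]
    refine Finset.sum_congr rfl fun i _ => ?_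
    have h1 : (homogeneousComponent i y * h).IsHomogeneous (i + e) :=
      (homogeneousComponent_isHomogeneous i y).mul hh
    rw [homogeneousComponent_of_mem (m := N) ((mem_homogeneousSubmodule _ _).2 h1)]
    split_ifs <;> simp

lemma ord_congr {f : MvPolynomial (Fin 3) k} (q : PlanePoint f) {g h y : MvPolynomial (Fin 3) k} (hgh : g = h + y * f) :
    ordAt f q g = ordAt f q h := by
  rw [ordAt_eq, ordAt_eq]
  congr 1
  ext n
  have : y * f ∈ sI f q.1.rep + mI q.1.rep ^ n :=
    (le_sup_left : sI f q.1.rep ≤ _) (Ideal.mul_mem_left _ _ (Ideal.subset_span (by simp)))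
  simp only [Set.mem_ofPred_eq]
  rw [hgh, Ideal.add_mem_iff_left _ this]

section

lemma Sm.ord_one {f : MvPolynomial (Fin 3) k} {d : ℕ} (hS : Sm f d) (q : PlanePoint f) : ordAt f q 1 = 0 := by
  have h1 : ¬ f ∣ 1 := fun h => hS.prime.not_isUnit (isUnit_of_dvd_one h)
  have := hS.ord_mul q (isHomogeneous_one (Fin 3) k) h1 (isHomogeneous_one (Fin 3) k) h1
  rw [mul_one] at this
  omega

lemma Sm.ord_prod {f : MvPolynomial (Fin 3) k} {d : ℕ} (hS : Sm f d) {ι : Type*} (s : Finset ι) (cc : ι → Fin 3 → k) (hcc : ∀ i, cc i ≠ 0) :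
    (∏ i ∈ s, lin (cc i)).IsHomogeneous s.card ∧ ¬ f ∣ (∏ i ∈ s, lin (cc i)) ∧
    ∀ q : PlanePoint f, ordAt f q (∏ i ∈ s, lin (cc i)) = ∑ i ∈ s, ordAt f q (lin (cc i)) := by
  classical
  induction s using Finset.induction_on with
  | empty =>
    refine ⟨by simpa using isHomogeneous_one (Fin 3) k, ?_, ?_⟩
    · intro h; exact hS.prime.not_isUnit (isUnit_of_dvd_one (by simpa using h))
    · intro q; simp [hS.ord_one]
  | insert i s hi ih =>
    obtain ⟨i1, i2, i3⟩ := ih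
    rw [Finset.prod_insert hi, Finset.card_insert_of_notMem hi, add_comm]
    refine ⟨(lin_hom _).mul i1, ?_, ?_⟩
    · intro h
      rcases hS.prime.dvd_or_dvd h with h | h
      · exact hS.not_dvd_lin (hcc i) h
      · exact i2 h
    · intro q
      rw [hS.ord_mul q (lin_hom _) (hS.not_dvd_lin (hcc i)) i1 i2, i3, Finset.sum_insert hi]

open Classical in
lemma Sm.main {f : MvPolynomial (Fin 3) k} {d : ℕ} (hS : Sm f d) [IsAlgClosed k] {m : ℕ} (hm : m + 2 ≤ d) (p : Fin m → PlanePoint f) (hp : Function.Injective p)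
    {e : ℕ} {g h : MvPolynomial (Fin 3) k} (hg : g.IsHomogeneous e) (hh : h.IsHomogeneous e)
    (hfg : ¬ f ∣ g) (hfh : ¬ f ∣ h)
    (hord : ∀ q, ordAt f q h ≤ ordAt f q g + (Finset.univ.filter (fun i => p i = q)).card) :
    ∃ c : k, f ∣ g - C c * h := by
  have : Infinite k := IsAlgClosed.instInfinite
  have hex := fun i => exists_cc (p i).1.rep (p i).1.rep_nonzero (fun j => (p j).1.rep)
  choose cc hcc0 hcci hccj using hex
  have hccj' : ∀ i j, j ≠ i → eval (p j).1.rep (lin (cc i)) ≠ 0 := fun i j hij =>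
    hccj i j (pp_indep (fun h => hij (hp h)))
  obtain ⟨hA1, hA2, hA3⟩ := hS.ord_prod Finset.univ cc hcc0
  set A := ∏ i, lin (cc i) with hA
  rw [Finset.card_univ, Fintype.card_fin] at hA1
  have hlo : ∀ i, 1 ≤ ordAt f (p i) (lin (cc i)) := by
    intro i
    rw [← hS.mem_iff (p i) (lin_hom _) (hS.not_dvd_lin (hcc0 i)), pow_one]
    exact (le_sup_right : mI (p i).1.rep ≤ _) (hcci i)
  have hlo' : ∀ q i, (if p i = q then 1 else 0) ≤ ordAt f q (lin (cc i)) := by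
    intro q i
    split_ifs with hh
    · rw [← hh]; exact hlo i
    · exact Nat.zero_le _
  have hcard : ∀ q, (Finset.univ.filter (fun i => p i = q)).card = ∑ i, if p i = q then 1 else 0 := by
    intro q; rw [Finset.card_filter]
  have hfgA : ¬ f ∣ g * A := fun hh => (hS.prime.dvd_or_dvd hh).elim hfg hA2
  have hgA := hg.mul hA1
  have h1 : g * A ∈ Ideal.span {h, f} := by
    refine hS.noether hgA hfgA hh hfh fun q => ?_
    rw [hS.ord_mul q hg hfg hA1 hA2, hA3]
    refine (hord q).trans ?_
    rw [hcard]
    exact Nat.add_le_add_left (Finset.sum_le_sum fun i _ => hlo' q i) _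
  obtain ⟨x, y, hxy⟩ := Ideal.mem_span_pair.1 h1
  obtain ⟨B, hB, hBx⟩ := hc_mul hh (e + m) x
  obtain ⟨y', -, hy'⟩ := hc_mul hS.hom (e + m) y
  rw [Nat.add_sub_cancel_left] at hB
  have h2 : g * A = B * h + y' * f := by
    rw [← hBx, ← hy', ← map_add, hxy,
      homogeneousComponent_of_mem (m := e + m) ((mem_homogeneousSubmodule _ _).2 hgA), if_pos rfl]
  have hfB : ¬ f ∣ B := by
    rintro ⟨r, hr⟩
    exact hfgA ⟨r * h + y', by rw [h2, hr]; ring⟩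
  have hordB : ∀ q, ordAt f q B + ordAt f q h = ordAt f q g + ∑ i, ordAt f q (lin (cc i)) := by
    intro q
    rw [← hA3, ← hS.ord_mul q hg hfg hA1 hA2, ← hS.ord_mul q hB hfB hh hfh]
    exact (ord_congr q h2).symm
  have hdvd : ∀ i, lin (cc i) ∣ B := by
    intro i
    refine hS.line_B (p i) (hcc0 i) (hcci i) hB hm hfB fun q => ?_
    have e1 := hordB q
    have e2 := hord q
    rw [hcard] at e2
    have e3 : ∑ j, (if p j = q then 1 else 0) + ordAt f q (lin (cc i)) ≤
        ∑ j, ordAt f q (lin (cc j)) + (if p i = q then 1 else 0) := by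
      rw [← Finset.add_sum_erase _ _ (Finset.mem_univ i),
        ← Finset.add_sum_erase (a := i) _ (fun j => ordAt f q (lin (cc j))) (Finset.mem_univ i)]
      have := Finset.sum_le_sum (s := Finset.univ.erase i) fun j _ => hlo' q j
      omega
    omega
  have hAB : A ∣ B := by
    refine Finset.prod_dvd_of_isRelPrime ?_ fun i _ => hdvd i
    intro i _ j _ hij
    refine (lin_prime (hcc0 i)).irreducible.isRelPrime_iff_not_dvd.2 ?_
    rintro ⟨r, hr⟩
    apply hccj' j i hij
    change lin (cc j) = _ at hr
    rw [hr, map_mul, hcci, zero_mul]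
  obtain ⟨r, hr⟩ := hAB
  have hB0 : B ≠ 0 := by rintro rfl; exact hfB (dvd_zero f)
  have hA0 : A ≠ 0 := by intro h; exact hA2 (h ▸ dvd_zero f)
  have hr0 : r ≠ 0 := by rintro rfl; exact hB0 (by simpa using hr)
  have hrd : r.totalDegree = 0 := by
    have := totalDegree_mul_of_isDomain hA0 hr0
    rw [← hr, hB.totalDegree hB0, hA1.totalDegree hA0] at this
    omega
  rw [totalDegree_eq_zero_iff_eq_C] at hrd
  refine ⟨coeff 0 r, (hS.prime.dvd_or_dvd (a := A) ⟨y', ?_⟩).resolve_left hA2⟩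
  rw [← hrd]
  linear_combination h2 + h * hr

end
end
end PC

open Classical in
/-- If `C ⊆ ℙ²_k` is a smooth plane curve of degree `d` over an algebraically closed field,
`p₁, …, p_m` are distinct points of `C` with `m ≤ d - 2`, and
`L = O_C(p₁ + ⋯ + p_m)`, then `h⁰(C, L) = 1`. -/
theorem h0_eq_one_of_card_le_degree_sub_two
    (k : Type*) [Field k] [IsAlgClosed k]
    (d : ℕ) (f : MvPolynomial (Fin 3) k) (hf : f.IsHomogeneous d)
    (hsm : ∀ v : Fin 3 → k, MvPolynomial.eval v f = 0 →
      (∀ i : Fin 3, MvPolynomial.eval v (MvPolynomial.pderiv i f) = 0) → v = 0)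
    (m : ℕ) (hm : m + 2 ≤ d)
    (p : Fin m → PlanePoint f) (hp : Function.Injective p)
    (F : Type*) [Field F]
    [Algebra (MvPolynomial (Fin 3) k ⧸ Ideal.span {f}) F]
    [IsFractionRing (MvPolynomial (Fin 3) k ⧸ Ideal.span {f}) F]
    [Algebra k F] [IsScalarTower k (MvPolynomial (Fin 3) k ⧸ Ideal.span {f}) F] :
    h0 F f (fun q => ((Finset.univ.filter (fun i => p i = q)).card : ℤ)) = 1 := by
  have hf0 : f ≠ 0 := by
    rintro rfl
    have := hsm 1 (by simp) (by simp)
    exact one_ne_zero this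
  have hinj := IsFractionRing.injective (MvPolynomial (Fin 3) k ⧸ Ideal.span {f}) F
  have hdom : IsDomain (MvPolynomial (Fin 3) k ⧸ Ideal.span {f}) := hinj.isDomain _
  have hpr : Prime f := (Ideal.span_singleton_prime hf0).1 ((Ideal.Quotient.isDomain_iff_prime _).1 hdom)
  have hS : PC.Sm f d := ⟨hf, hpr, by omega, fun v hv hv0 => by
    by_contra! hcon
    exact hv0 (hsm v hv hcon)⟩
  have hspan : Submodule.span k (RRspace F f (fun q => ((Finset.univ.filter (fun i => p i = q)).card : ℤ)))
      = Submodule.span k {(1 : F)} := by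
    apply le_antisymm
    · rw [Submodule.span_le]
      rintro φ (rfl | ⟨e, g, h, hg, hh, hfg, hfh, hφ, hq⟩)
      · exact Submodule.zero_mem _
      · obtain ⟨c, hc⟩ := hS.main hm p hp hg hh hfg hfh (fun q => by have := hq q; dsimp only at this; omega)
        rw [SetLike.mem_coe, Submodule.mem_span_singleton]
        refine ⟨c, ?_⟩
        have h1 : algebraMap (MvPolynomial (Fin 3) k ⧸ Ideal.span {f}) F (Ideal.Quotient.mk (Ideal.span {f}) h) ≠ 0 := by
          rw [Ne, map_eq_zero_iff _ hinj, Ideal.Quotient.eq_zero_iff_mem, Ideal.mem_span_singleton]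
          exact hfh
        apply mul_right_cancel₀ h1
        rw [hφ, Algebra.smul_def, mul_one,
          IsScalarTower.algebraMap_apply k (MvPolynomial (Fin 3) k ⧸ Ideal.span {f}) F, ← map_mul]
        congr 1
        symm
        have h2 : algebraMap k (MvPolynomial (Fin 3) k ⧸ Ideal.span {f}) c = Ideal.Quotient.mk (Ideal.span {f}) (C c) := rfl
        rw [h2, ← map_mul, Ideal.Quotient.eq, Ideal.mem_span_singleton]
        exact hc
    · rw [Submodule.span_le, Set.singleton_subset_iff]
      apply Submodule.subset_span
      have h1 : ¬ f ∣ 1 := fun h => hpr.not_isUnit (isUnit_of_dvd_one h)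
      exact Or.inr ⟨0, 1, 1, isHomogeneous_one _ _, isHomogeneous_one _ _, h1, h1, by simp, fun q => by simp⟩
  rw [h0, hspan]
  exact finrank_span_singleton one_ne_zero
end
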